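/- arXiv:2207.13672 — 12 statements merged into one kernel-verified Lean document; each statement's English description precedes it below -/
import Mathlib

section
/- If two proper metric spaces (X,d_X) and (Y,d_Y) are both integrally (k,k)-quasi-geodesic for some k ≥ 1, then their cartesian product X × Y equipped with the ℓ₁-metric d₁((x₁,y₁),(x₂,y₂)) = d_X(x₁,x₂) + d_Y(y₁,y₂) is integrally (2k,2k)-quasi-geodesic; consequently X × Y equipped with the ℓ₂-metric d₂((x₁,y₁),(x₂,y₂)) = √(d_X(x₁,x₂)² + d_Y(y₁,y₂)²) is integrally quasi-geodesic. -/
open Filter Metric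

/-- `g` is an integral `(q,Q)`-quasi-geodesic on the index set `s ⊆ ℕ`:
`|x − y|/q − Q ≤ d(g x, g y) ≤ q·|x − y| + Q` for all `x, y ∈ s`. -/
def IsQGOn {X : Type*} [MetricSpace X] (q Q : ℝ) (g : ℕ → X) (s : Set ℕ) : Prop :=
  ∀ x ∈ s, ∀ y ∈ s,
    |(x : ℝ) - (y : ℝ)| / q - Q ≤ dist (g x) (g y) ∧
    dist (g x) (g y) ≤ q * |(x : ℝ) - (y : ℝ)| + Q

/-- An integral `(q,Q)`-quasi-geodesic ray: domain all positive integers. -/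
def IsQGRay {X : Type*} [MetricSpace X] (q Q : ℝ) (g : ℕ → X) : Prop :=
  IsQGOn q Q g {i | 1 ≤ i}

/-- The `m`-cone `C_X(x₀,q,Q,g,m)`: all `x ∈ X` reachable as `h i`, `i ≥ m`, by an
integral `(q,Q)`-quasi-geodesic `h` starting at `x₀` and agreeing with `g` for indices `≤ m`. -/
def Cone {X : Type*} [MetricSpace X] (x₀ : X) (q Q : ℝ) (g : ℕ → X) (m : ℕ) : Set X :=
  {x | ∃ (h : ℕ → X) (n i : ℕ), IsQGOn q Q h (Set.Icc 1 n) ∧ h 1 = x₀ ∧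
      (∀ j, 1 ≤ j → j ≤ m → h j = g j) ∧ m ≤ i ∧ i ≤ n ∧ h i = x}

/-- `f` is slowly-oscillating: whenever `d(x₀,xₙ) → ∞` and `d(xₙ,yₙ) < M` for all `n ≥ 1`,
then `d(f xₙ, f yₙ) → 0`. -/
def SlowlyOscillating {X E : Type*} [MetricSpace X] [PseudoMetricSpace E] (f : X → E) : Prop :=
  ∀ (x₀ : X) (x y : ℕ → X),
    Tendsto (fun n => dist x₀ (x n)) atTop atTop →
    (∃ M > (0 : ℝ), ∀ n, 1 ≤ n → dist (x n) (y n) < M) →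
    Tendsto (fun n => dist (f (x n)) (f (y n))) atTop (nhds 0)

/-- `f` is geometrically slowly-oscillating: bounded, continuous, slowly-oscillating, and
for every `ε > 0`, `k ≥ 1`, `x₀` and integral `(k,k)`-quasi-geodesic ray `g` at `x₀`
there is `m ≥ 1` with `diam (f '' C_X(x₀,k,k,g,m)) < ε`. -/
def GeomSO {X E : Type*} [MetricSpace X] [PseudoMetricSpace E] (f : X → E) : Prop :=
  Bornology.IsBounded (Set.range f) ∧ Continuous f ∧ SlowlyOscillating f ∧
    ∀ ε > (0 : ℝ), ∀ k : ℝ, 1 ≤ k → ∀ (x₀ : X) (g : ℕ → X),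
      IsQGRay k k g → g 1 = x₀ →
      ∃ m : ℕ, 1 ≤ m ∧ Metric.diam (f '' Cone x₀ k k g m) < ε

/-- Every bounded subset of `X` can be covered by finitely many sets of diameter less than `M`. -/
def CoverM (X : Type*) [MetricSpace X] (M : ℝ) : Prop :=
  ∀ B : Set X, Bornology.IsBounded B →
    ∃ S : Finset (Set X), (∀ s ∈ S, Metric.diam s < M) ∧ B ⊆ ⋃ s ∈ S, (s : Set X)

/-- `X` is integrally `(q,Q)`-quasi-geodesic: every two points are joined by a finite
integral `(q,Q)`-quasi-geodesic. -/
def IntegrallyQGWith (X : Type*) [MetricSpace X] (q Q : ℝ) : Prop :=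
  ∀ x y : X, ∃ (g : ℕ → X) (n : ℕ), 1 ≤ n ∧ IsQGOn q Q g (Set.Icc 1 n) ∧ g 1 = x ∧ g n = y

/-- The Gromov product `⟨x,y⟩_a = (d(x,a) + d(y,a) − d(x,y))/2`. -/
noncomputable def gromovProd {X : Type*} [MetricSpace X] (a x y : X) : ℝ :=
  (dist x a + dist y a - dist x y) / 2

/-- `X` is a geodesic space: any two points are joined by a geodesic segment. -/
def IsGeodesicSpace (X : Type*) [MetricSpace X] : Prop :=
  ∀ x y : X, ∃ γ : ℝ → X, γ 0 = x ∧ γ (dist x y) = y ∧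
    ∀ s ∈ Set.Icc (0 : ℝ) (dist x y), ∀ t ∈ Set.Icc (0 : ℝ) (dist x y),
      dist (γ s) (γ t) = |s - t|


/-- The concatenated path, with estimates on the sum of the two distances. -/
theorem prod_path_aux {X Y : Type*} [MetricSpace X] [MetricSpace Y] (k : ℝ)
    (hX : IntegrallyQGWith X k k) (hY : IntegrallyQGWith Y k k) (hk : 1 ≤ k)
    (a c : X) (b d : Y) :
    ∃ (u : ℕ → X) (v : ℕ → Y) (n : ℕ), 1 ≤ n ∧ u 1 = a ∧ v 1 = b ∧ u n = c ∧ v n = d ∧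
      ∀ i ∈ Set.Icc 1 n, ∀ j ∈ Set.Icc 1 n,
        |(i : ℝ) - (j : ℝ)| / k - 2 * k ≤ dist (u i) (u j) + dist (v i) (v j) ∧
        dist (u i) (u j) + dist (v i) (v j) ≤ k * |(i : ℝ) - (j : ℝ)| + 2 * k := by
  obtain ⟨g, n, hn, hg, hg1, hgn⟩ := hX a c
  obtain ⟨h, m, hm, hh, hh1, hhm⟩ := hY b d
  refine ⟨fun i => g (min i n), fun i => h (i - n + 1), n + m - 1, by omega, ?_, ?_, ?_, ?_, ?_⟩
  · simp [hn, hg1]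
  · have : 1 - n + 1 = 1 := by omega
    simp [this, hh1]
  · have : min (n + m - 1) n = n := by omega
    simp [this, hgn]
  · have : n + m - 1 - n + 1 = m := by omega
    simp [this, hhm]
  -- the ordered case suffices
  have key : ∀ i j : ℕ, 1 ≤ i → i ≤ j → j ≤ n + m - 1 →
      |(i : ℝ) - (j : ℝ)| / k - 2 * k ≤
        dist (g (min i n)) (g (min j n)) + dist (h (i - n + 1)) (h (j - n + 1)) ∧
      dist (g (min i n)) (g (min j n)) + dist (h (i - n + 1)) (h (j - n + 1)) ≤
        k * |(i : ℝ) - (j : ℝ)| + 2 * k := by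
    intro i j hi hij hj
    have h1 := hg (min i n) ⟨by omega, by omega⟩ (min j n) ⟨by omega, by omega⟩
    have h2 := hh (i - n + 1) ⟨by omega, by omega⟩ (j - n + 1) ⟨by omega, by omega⟩
    have e1 : |((min i n : ℕ) : ℝ) - ((min j n : ℕ) : ℝ)| = ((min j n - min i n : ℕ) : ℝ) := by
      rw [abs_sub_comm, Nat.cast_sub (by omega), abs_of_nonneg]
      exact sub_nonneg.2 (by exact_mod_cast (by omega))
    have e2 : |((i - n + 1 : ℕ) : ℝ) - ((j - n + 1 : ℕ) : ℝ)|
        = (((j - n + 1) - (i - n + 1) : ℕ) : ℝ) := by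
      rw [abs_sub_comm, Nat.cast_sub (by omega), abs_of_nonneg]
      exact sub_nonneg.2 (by exact_mod_cast (by omega))
    have e3 : |(i : ℝ) - (j : ℝ)| = ((min j n - min i n : ℕ) : ℝ)
        + (((j - n + 1) - (i - n + 1) : ℕ) : ℝ) := by
      rw [abs_sub_comm, abs_of_nonneg (sub_nonneg.2 (by exact_mod_cast hij)),
        ← Nat.cast_sub hij]
      exact_mod_cast (by omega)
    rw [e1] at h1
    rw [e2] at h2
    rw [e3, add_div, mul_add]
    constructor <;> linarith [h1.1, h1.2, h2.1, h2.2]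
  intro i hi j hj
  rcases le_total i j with hij | hij
  · exact key i j hi.1 hij hj.2
  · have := key j i hj.1 hij hi.2
    rw [abs_sub_comm, dist_comm (g (min i n)), dist_comm (h (i - n + 1))]
    exact this

/-- Proposition 2.7: the product of two proper integrally (k,k)-quasi-geodesic spaces is
integrally (2k,2k)-quasi-geodesic in the ℓ₁-metric, hence integrally quasi-geodesic in
the ℓ₂-metric. -/
theorem stmt_1 {X Y : Type*} [MetricSpace X] [MetricSpace Y]
    [ProperSpace X] [ProperSpace Y] (k : ℝ) (hk : 1 ≤ k)
    (hX : IntegrallyQGWith X k k) (hY : IntegrallyQGWith Y k k) :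
    IntegrallyQGWith (WithLp 1 (X × Y)) (2 * k) (2 * k) ∧
      ∃ q Q : ℝ, 1 ≤ q ∧ 0 ≤ Q ∧ IntegrallyQGWith (WithLp 2 (X × Y)) q Q := by
  have hdiv : ∀ t : ℝ, |t| / (2 * k) = |t| / k / 2 := fun t => by
    rw [div_div, mul_comm]
  refine ⟨?_, 2 * k, 2 * k, by linarith, by linarith, ?_⟩
  · intro x y
    obtain ⟨u, v, n, hn, hu1, hv1, hun, hvn, H⟩ := prod_path_aux k hX hY hk x.fst y.fst x.snd y.snd
    refine ⟨fun i => WithLp.toLp 1 (u i, v i), n, hn, ?_, ?_, ?_⟩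
    · intro i hi j hj
      have hd : dist (WithLp.toLp 1 (u i, v i)) (WithLp.toLp 1 (u j, v j))
          = dist (u i) (u j) + dist (v i) (v j) := by
        rw [WithLp.prod_dist_eq_add (by simp)]
        simp
      have h0 : 0 ≤ |(i : ℝ) - j| / k := by positivity
      have h1 : 0 ≤ k * |(i : ℝ) - j| := by positivity
      have := H i hi j hj
      rw [hd, hdiv]
      constructor <;> linarith [this.1, this.2]
    · simp only [hu1, hv1]; rfl
    · simp only [hun, hvn]; rfl
  · intro x y
    obtain ⟨u, v, n, hn, hu1, hv1, hun, hvn, H⟩ := prod_path_aux k hX hY hk x.fst y.fst x.snd y.snd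
    refine ⟨fun i => WithLp.toLp 2 (u i, v i), n, hn, ?_, ?_, ?_⟩
    · intro i hi j hj
      have hd : dist (WithLp.toLp 2 (u i, v i)) (WithLp.toLp 2 (u j, v j))
          = √(dist (u i) (u j) ^ 2 + dist (v i) (v j) ^ 2) := by
        rw [WithLp.prod_dist_eq_add (by simp), Real.sqrt_eq_rpow]
        simp
      have h0 : 0 ≤ |(i : ℝ) - j| / k := by positivity
      have h1 : 0 ≤ k * |(i : ℝ) - j| := by positivity
      have hp : 0 ≤ dist (u i) (u j) := dist_nonneg
      have hq : 0 ≤ dist (v i) (v j) := dist_nonneg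
      have lo : (dist (u i) (u j) + dist (v i) (v j)) / 2
          ≤ √(dist (u i) (u j) ^ 2 + dist (v i) (v j) ^ 2) :=
        Real.le_sqrt_of_sq_le (by nlinarith [sq_nonneg (dist (u i) (u j) - dist (v i) (v j))])
      have hi' : √(dist (u i) (u j) ^ 2 + dist (v i) (v j) ^ 2)
          ≤ dist (u i) (u j) + dist (v i) (v j) :=
        Real.sqrt_le_iff.2 ⟨by positivity, by nlinarith [mul_nonneg hp hq]⟩
      have := H i hi j hj
      rw [hd, hdiv]
      constructor <;> linarith [this.1, this.2]
    · simp only [hu1, hv1]; rfl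
    · simp only [hun, hvn]; rfl
end

section
/- Suppose X is a metric space and U is a coarsely clopen subset of X. Then any bounded continuous function f : X → ℂ for which there is a bounded subset B of X such that both the restriction of f to U ∖ B and the restriction of f to (X ∖ U) ∖ B are constant is geometrically slowly-oscillating. -/
open Filter Metric

/-- U is coarsely clopen in X. -/
def CoarselyClopen {X : Type*} [MetricSpace X] (U : Set X) : Prop :=
  ∀ r > (0 : ℝ), ∃ B : Set X, Bornology.IsBounded B ∧
    ∀ x ∈ U \ B, ∀ y ∈ Uᶜ \ B, dist x y > r

theorem key_aux {X : Type*} [MetricSpace X] (U : Set X) (hU : CoarselyClopen U)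
    (f : X → ℂ)
    (hconst : ∃ B : Set X, Bornology.IsBounded B ∧
      (∀ x ∈ U \ B, ∀ y ∈ U \ B, f x = f y) ∧
      (∀ x ∈ Uᶜ \ B, ∀ y ∈ Uᶜ \ B, f x = f y)) (r : ℝ) (hr : 0 < r) (x₀ : X) :
    ∃ R : ℝ, ∀ x y, R < dist x₀ x → dist x y ≤ r → f x = f y := by
  obtain ⟨B, hB, h1, h2⟩ := hconst
  obtain ⟨C, hC, h3⟩ := hU r hr
  obtain ⟨R, hR⟩ := (hB.union hC).subset_closedBall x₀
  have hn : ∀ z, R < dist x₀ z → z ∉ B ∧ z ∉ C := by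
    intro z hz
    constructor
    · intro h
      have := hR (Or.inl h)
      rw [mem_closedBall, dist_comm] at this
      linarith
    · intro h
      have := hR (Or.inr h)
      rw [mem_closedBall, dist_comm] at this
      linarith
  refine ⟨R + r, fun x y hx hxy => ?_⟩
  obtain ⟨xB, xC⟩ := hn x (by linarith)
  obtain ⟨yB, yC⟩ := hn y (by
    have := dist_triangle x₀ y x
    rw [dist_comm y x] at this
    linarith)
  by_cases hxU : x ∈ U
  · by_cases hyU : y ∈ U
    · exact h1 x ⟨hxU, xB⟩ y ⟨hyU, yB⟩
    · have := h3 x ⟨hxU, xC⟩ y ⟨hyU, yC⟩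
      linarith
  · by_cases hyU : y ∈ U
    · have := h3 y ⟨hyU, yC⟩ x ⟨hxU, xC⟩
      rw [dist_comm] at this
      linarith
    · exact h2 x ⟨hxU, xB⟩ y ⟨hyU, yB⟩

/-- Example 3.3: a bounded continuous function eventually constant on a coarsely clopen
set and on its complement is geometrically slowly oscillating. -/
theorem stmt_3 {X : Type*} [MetricSpace X] (U : Set X) (hU : CoarselyClopen U)
    (f : X → ℂ) (hb : Bornology.IsBounded (Set.range f)) (hc : Continuous f)
    (hconst : ∃ B : Set X, Bornology.IsBounded B ∧
      (∀ x ∈ U \ B, ∀ y ∈ U \ B, f x = f y) ∧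
      (∀ x ∈ Uᶜ \ B, ∀ y ∈ Uᶜ \ B, f x = f y)) :
    GeomSO f := by
  refine ⟨hb, hc, ?_, ?_⟩
  · rintro x₀ x y hx ⟨M, hM, hxy⟩
    obtain ⟨R, hR⟩ := key_aux U hU f hconst M hM x₀
    refine tendsto_const_nhds.congr' ?_
    filter_upwards [hx.eventually_gt_atTop R, eventually_ge_atTop 1] with n h1 h2
    rw [hR _ _ h1 (hxy n h2).le, dist_self]
  · intro ε hε k hk x₀ g _ _
    obtain ⟨R, hR⟩ := key_aux U hU f hconst (k + k) (by linarith) x₀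
    obtain ⟨m, hm⟩ := exists_nat_gt (max 1 ((R + k) * k + 1))
    have hm1 : 1 ≤ m := by
      have : (1 : ℝ) < m := lt_of_le_of_lt (le_max_left _ _) hm
      exact_mod_cast this.le
    have hm2 : (R + k) * k + 1 < m := lt_of_le_of_lt (le_max_right _ _) hm
    refine ⟨m, hm1, ?_⟩
    have hall : ∀ x ∈ Cone x₀ k k g m, f x = f (g m) := by
      rintro x ⟨h, n, i, hq, h0, hag, hmi, hin, rfl⟩
      induction i, hmi using Nat.le_induction with
      | base => rw [hag m hm1 le_rfl]
      | succ j hj ih =>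
        rw [← ih (by omega)]
        symm
        apply hR
        · have h1 := (hq 1 ⟨le_rfl, by omega⟩ j ⟨by omega, by omega⟩).1
          rw [h0] at h1
          have hj' : (m : ℝ) ≤ j := by exact_mod_cast hj
          have h2 : (j : ℝ) - 1 ≤ |((1 : ℕ) : ℝ) - j| := by
            rw [abs_sub_comm]
            simpa using le_abs_self ((j : ℝ) - 1)
          have h3 : R + k < |((1 : ℕ) : ℝ) - j| / k := by
            rw [lt_div_iff₀ (by linarith)]
            linarith
          linarith
        · have h1 := (hq j ⟨by omega, by omega⟩ (j + 1) ⟨by omega, by omega⟩).2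
          simpa using h1
    have hs : (f '' Cone x₀ k k g m).Subsingleton := by
      rintro _ ⟨a, ha, rfl⟩ _ ⟨b, hb', rfl⟩
      rw [hall a ha, hall b hb']
    rw [diam_subsingleton hs]
    exact hε
end

section
/- Let f : X → ℂ be a geometrically slowly-oscillating function on a metric space X, let k ≥ 1, and let gₙ be a sequence of integral (k,k)-quasi-geodesic rays in X boundedly approaching an integral quasi-geodesic ray g. Then f(gₙ) → f(g), where for an integral quasi-geodesic ray h, f(h) denotes the limit of the Cauchy sequence (f(h(i)))_{i ≥ 1}. Moreover, if instead the gₙ are finite integral (k,k)-quasi-geodesics with endpoints yₙ boundedly approaching g, then f(yₙ) → f(g). -/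
open Filter Metric

theorem key_aux_s6 {X : Type*} [MetricSpace X] (f : X → ℂ) (hf : GeomSO f)
    (k : ℝ) (hk : 1 ≤ k) (g : ℕ → X)
    (hg : ∃ q Q : ℝ, 1 ≤ q ∧ 0 ≤ Q ∧ IsQGRay q Q g)
    (Lg : ℂ) (hLg : Tendsto (fun i => f (g i)) atTop (nhds Lg)) (C : ℝ) (hC : 0 < C)
    (ε : ℝ) (hε : 0 < ε) :
    ∃ m : ℕ, 1 ≤ m ∧ ∀ (h : ℕ → X) (i : ℕ), m < i → IsQGOn k k h (Set.Icc 1 i) →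
      (∀ j, 1 ≤ j → j ≤ m → dist (h j) (g j) < C) → dist (f (h i)) Lg ≤ ε := by
  obtain ⟨q, Q, hq, hQ, hgr⟩ := hg
  obtain ⟨hb, -, -, hcone⟩ := hf
  obtain ⟨K, hK⟩ : ∃ K, K = q + Q + k + C := ⟨_, rfl⟩
  have weak : ∀ (a b t d : ℝ), 1 ≤ a → a ≤ K → b ≤ K → 0 ≤ t →
      t / a - b ≤ d ∧ d ≤ a * t + b → t / K - K ≤ d ∧ d ≤ K * t + K := by
    intro a b t d ha haK hbK ht ⟨h1, h2⟩
    have e1 : t / K ≤ t / a := div_le_div_of_nonneg_left ht (by linarith) haK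
    have e2 : a * t ≤ K * t := mul_le_mul_of_nonneg_right haK ht
    constructor <;> linarith
  have hgK : IsQGRay K K g := fun x hx y hy =>
    weak q Q _ _ hq (by linarith) (by linarith) (abs_nonneg _) (hgr x hx y hy)
  obtain ⟨m, hm, hd⟩ := hcone ε hε K (by linarith) (g 1) g hgK rfl
  refine ⟨m, hm, fun h i hi hh hclose => ?_⟩
  have hmem : h i ∈ Cone (g 1) K K g m := by
    refine ⟨fun j => if j ≤ m then g j else h j, i, i, ?_, ?_, ?_, hi.le, le_rfl, ?_⟩
    · intro x hx y hy
      have mixed : ∀ a b : ℕ, a ∈ Set.Icc 1 i → b ∈ Set.Icc 1 i → a ≤ m →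
          |(a : ℝ) - b| / K - K ≤ dist (g a) (h b) ∧
            dist (g a) (h b) ≤ K * |(a : ℝ) - b| + K := by
        intro a b ha hb' ham
        have h1 := hclose a ha.1 ham
        have h2 := hh a ha b hb'
        have t1 := dist_triangle (h a) (g a) (h b)
        have t2 := dist_triangle (g a) (h a) (h b)
        rw [dist_comm (g a) (h a)] at t2
        exact weak k (k + C) _ _ hk (by linarith) (by linarith) (abs_nonneg _)
          ⟨by linarith [h2.1], by linarith [h2.2]⟩
      by_cases hxm : x ≤ m <;> by_cases hym : y ≤ m <;> simp only [hxm, hym, if_true, if_false]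
      · exact hgK x hx.1 y hy.1
      · exact mixed x y hx hy hxm
      · rw [dist_comm, abs_sub_comm]
        exact mixed y x hy hx hym
      · exact weak k k _ _ hk (by linarith) (by linarith) (abs_nonneg _) (hh x hx y hy)
    · simp [hm]
    · intro j _ hj
      simp [hj]
    · simp [not_le.mpr hi]
  have hgm : ∀ j, m ≤ j → g j ∈ Cone (g 1) K K g m := fun j hj =>
    ⟨g, j, j, fun x hx y hy => hgK x hx.1 y hy.1, rfl, fun _ _ _ => rfl, hj, le_rfl, rfl⟩
  have hbd : Bornology.IsBounded (f '' Cone (g 1) K K g m) :=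
    hb.subset (Set.image_subset_range _ _)
  refine le_of_tendsto (tendsto_const_nhds.dist hLg) ?_
  filter_upwards [eventually_ge_atTop m] with j hj
  exact (dist_le_diam_of_mem hbd ⟨_, hmem, rfl⟩ ⟨_, hgm j hj, rfl⟩).trans hd.le

/-- Proposition 3.7: if integral (k,k)-quasi-geodesic rays gₙ boundedly approach g, then
f(gₙ) → f(g) for every geometrically slowly-oscillating f; if instead the gₙ are finite
with endpoints yₙ, then f(yₙ) → f(g). -/
theorem stmt_6 {X : Type*} [MetricSpace X] (f : X → ℂ) (hf : GeomSO f)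
    (k : ℝ) (hk : 1 ≤ k) (g : ℕ → X)
    (hg : ∃ q Q : ℝ, 1 ≤ q ∧ 0 ≤ Q ∧ IsQGRay q Q g)
    (Lg : ℂ) (hLg : Tendsto (fun i => f (g i)) atTop (nhds Lg)) :
    (∀ gs : ℕ → ℕ → X, (∀ n, IsQGRay k k (gs n)) →
      (∃ C > (0 : ℝ), ∀ m, 1 ≤ m → ∃ N, ∀ n, N ≤ n → ∀ i, 1 ≤ i → i ≤ m →
        dist (gs n i) (g i) < C) →
      ∀ Ls : ℕ → ℂ, (∀ n, Tendsto (fun i => f (gs n i)) atTop (nhds (Ls n))) →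
      Tendsto Ls atTop (nhds Lg)) ∧
    (∀ (gs : ℕ → ℕ → X) (len : ℕ → ℕ),
      (∀ n, IsQGOn k k (gs n) (Set.Icc 1 (len n))) →
      Tendsto len atTop atTop →
      (∃ C > (0 : ℝ), ∀ m, 1 ≤ m → ∃ N, ∀ n, N ≤ n → ∀ i, 1 ≤ i → i ≤ m →
        dist (gs n i) (g i) < C) →
      Tendsto (fun n => f (gs n (len n))) atTop (nhds Lg)) := by
  constructor
  · rintro gs hgs ⟨C, hC, happ⟩ Ls hLs
    rw [Metric.tendsto_atTop]
    intro ε hε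
    obtain ⟨m, hm, H⟩ := key_aux_s6 f hf k hk g hg Lg hLg C hC (ε / 2) (by linarith)
    obtain ⟨N, hN⟩ := happ m hm
    refine ⟨N, fun n hn => lt_of_le_of_lt ?_ (half_lt_self hε)⟩
    refine le_of_tendsto ((hLs n).dist tendsto_const_nhds) ?_
    filter_upwards [eventually_gt_atTop m] with i hi
    exact H (gs n) i hi (fun x hx y hy => hgs n x hx.1 y hy.1) (hN n hn)
  · rintro gs len hgs hlen ⟨C, hC, happ⟩
    rw [Metric.tendsto_nhds]
    intro ε hε
    obtain ⟨m, hm, H⟩ := key_aux_s6 f hf k hk g hg Lg hLg C hC (ε / 2) (by linarith)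
    obtain ⟨N, hN⟩ := happ m hm
    filter_upwards [eventually_ge_atTop N, hlen.eventually_gt_atTop m] with n hn hi
    exact lt_of_le_of_lt (H (gs n) (len n) hi (hgs n) (hN n hn)) (half_lt_self hε)
end

section
/- Let X be a metric space, let Y be a closed subset of X, and let r > 0 be such that every point of X is within distance r of Y. If g : X → [0,1] is a continuous slowly-oscillating function whose restriction to Y (with the subspace metric) is geometrically slowly-oscillating, then g is geometrically slowly-oscillating on X. -/
open Filter Metric

theorem qg_proj_aux {X : Type*} [MetricSpace X] {Y : Set X} (p : X → Y) {r k : ℝ} (hr : 0 < r)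
    (hk : 1 ≤ k) (hp : ∀ x, dist x (p x : X) ≤ r) {h : ℕ → X} {s : Set ℕ}
    (hh : IsQGOn k k h s) : IsQGOn (k + 2 * r) (k + 2 * r) (fun i => p (h i)) s := by
  intro x hx y hy
  obtain ⟨h1, h2⟩ := hh x hx y hy
  have hd : dist (p (h x)) (p (h y)) = dist (p (h x) : X) (p (h y) : X) := rfl
  have a1 := hp (h x)
  have a2 := hp (h y)
  have t1 := dist_triangle4_left (h x) (h y) (p (h x) : X) (p (h y) : X)
  have t2 := dist_triangle4_right (h x) (h y) (p (h x) : X) (p (h y) : X)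
  have hn : 0 ≤ |(x : ℝ) - (y : ℝ)| := abs_nonneg _
  have hdiv : |(x : ℝ) - (y : ℝ)| / (k + 2 * r) ≤ |(x : ℝ) - (y : ℝ)| / k :=
    div_le_div_of_nonneg_left hn (by linarith) (by linarith)
  have hm : k * |(x : ℝ) - (y : ℝ)| ≤ (k + 2 * r) * |(x : ℝ) - (y : ℝ)| :=
    mul_le_mul_of_nonneg_right (by linarith) hn
  simp only [hd]
  constructor <;> linarith

theorem so_unif_aux {X : Type*} [MetricSpace X] {g : X → ℝ} (hso : SlowlyOscillating g)
    (p : X → X) {r : ℝ} (hr : 0 < r) (hp : ∀ x, dist x (p x) ≤ r) (x₀ : X) {ε : ℝ} (hε : 0 < ε) :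
    ∃ R : ℝ, ∀ x, R ≤ dist x₀ x → dist (g x) (g (p x)) < ε := by
  by_contra! hcon
  choose u hu1 hu2 using fun n : ℕ => hcon (n : ℝ)
  have ht := hso x₀ u (fun n => p (u n))
    (tendsto_atTop_mono hu1 tendsto_natCast_atTop_atTop)
    ⟨r + 1, by linarith, fun n _ => by linarith [hp (u n)]⟩
  obtain ⟨n, hn⟩ := (ht.eventually (gt_mem_nhds hε)).exists
  exact absurd hn (not_lt.mpr (hu2 n))

/-- Lemma 4.2 (main step): if Y is a closed coarsely dense subset of X and g : X → [0,1]
is continuous, slowly-oscillating, and geometrically slowly-oscillating on Y, then g is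
geometrically slowly-oscillating on X. -/
theorem stmt_8 {X : Type*} [MetricSpace X] (Y : Set X) (hY : IsClosed Y)
    (r : ℝ) (hr : 0 < r) (hnet : ∀ x : X, ∃ y ∈ Y, dist x y ≤ r)
    (g : X → ℝ) (hrange : ∀ x, g x ∈ Set.Icc (0 : ℝ) 1)
    (hc : Continuous g) (hso : SlowlyOscillating g)
    (hres : GeomSO (fun y : Y => g y)) :
    GeomSO g := by
  have hbdd : ∀ s : Set ℝ, s ⊆ Set.Icc 0 1 → Bornology.IsBounded s :=
    fun s hs => (Metric.isBounded_Icc (0 : ℝ) 1).subset hs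
  refine ⟨hbdd _ (by rintro _ ⟨x, rfl⟩; exact hrange x), hc, hso, ?_⟩
  intro ε hε k hk x₀ γ hγ hγ1
  choose p0 hp0 hp1 using hnet
  let p : X → Y := fun x => ⟨p0 x, hp0 x⟩
  have hp : ∀ x, dist x (p x : X) ≤ r := hp1
  obtain ⟨m', hm', hdiam⟩ := hres.2.2.2 (ε / 4) (by linarith) (k + 2 * r) (by linarith)
    (p x₀) (fun i => p (γ i)) (qg_proj_aux p hr hk hp hγ) (by simp only [hγ1])
  obtain ⟨R, hR⟩ := so_unif_aux hso (fun x => (p x : X)) hr hp x₀ (ε := ε / 4) (by linarith)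
  obtain ⟨N, hN⟩ := exists_nat_ge (k * (R + k) + 1)
  refine ⟨max m' N, le_trans hm' (le_max_left _ _), ?_⟩
  have key : ∀ x ∈ Cone x₀ k k γ (max m' N),
      p x ∈ Cone (p x₀) (k + 2 * r) (k + 2 * r) (fun i => p (γ i)) m' ∧
      dist (g x) (g (p x)) < ε / 4 := by
    rintro x ⟨h, n, i, hq, h1, hag, hmi, hin, rfl⟩
    have hi1 : m' ≤ i := le_trans (le_max_left _ _) hmi
    have hi2 : N ≤ i := le_trans (le_max_right _ _) hmi
    refine ⟨⟨fun j => p (h j), n, i, qg_proj_aux p hr hk hp hq, by simp only [h1], ?_, hi1, hin,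
      rfl⟩, ?_⟩
    · intro j hj1 hj2
      simp only [hag j hj1 (le_trans hj2 (le_max_left _ _))]
    · apply hR
      have hl := (hq i ⟨by omega, hin⟩ 1 ⟨le_refl _, by omega⟩).1
      rw [h1, dist_comm] at hl
      have hi3 : (N : ℝ) ≤ i := by exact_mod_cast hi2
      have hab : (i : ℝ) - 1 ≤ |(i : ℝ) - ((1 : ℕ) : ℝ)| := by
        rw [Nat.cast_one]; exact le_abs_self _
      have : R + k ≤ |(i : ℝ) - ((1 : ℕ) : ℝ)| / k := by
        rw [le_div_iff₀ (by linarith)]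
        linarith [mul_comm k (R + k)]
      linarith
  have hle : Metric.diam (g '' Cone x₀ k k γ (max m' N)) ≤ 3 * (ε / 4) := by
    apply Metric.diam_le_of_forall_dist_le (by linarith)
    rintro _ ⟨x, hx, rfl⟩ _ ⟨y, hy, rfl⟩
    obtain ⟨hx1, hx2⟩ := key x hx
    obtain ⟨hy1, hy2⟩ := key y hy
    have hb := Metric.dist_le_diam_of_mem
      (hbdd ((fun y : Y => g y) '' Cone (p x₀) (k + 2 * r) (k + 2 * r) (fun i => p (γ i)) m')
        (by rintro _ ⟨z, _, rfl⟩; exact hrange z))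
      (Set.mem_image_of_mem _ hx1) (Set.mem_image_of_mem _ hy1)
    have t := dist_triangle4 (g x) (g (p x)) (g (p y)) (g y)
    rw [dist_comm (g (p y)) (g y)] at t
    linarith
  linarith
end

section
/- Let X be a metric space, x₀ ∈ X, k ≥ 1, and let g and h be integral (k,k)-quasi-geodesic rays in X with g(1) = x₀. If for every m ≥ 1 the m-cone C_X(x₀,k,k,g,m) contains h(i) for infinitely many i, then for every geometrically slowly-oscillating function f : X → ℝ one has lim_{i→∞} f(g(i)) = lim_{i→∞} f(h(i)); that is, g and h converge to the same point of the quasi-geodesic boundary. -/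
open Filter Metric

/-- Lemma 4.8: if every m-cone of g contains infinitely many points of h, then g and h
converge to the same point of the quasi-geodesic boundary. -/
theorem stmt_10 {X : Type*} [MetricSpace X] (x₀ : X) (k : ℝ) (hk : 1 ≤ k)
    (g h : ℕ → X) (hg : IsQGRay k k g) (hh : IsQGRay k k h) (hg1 : g 1 = x₀)
    (hinf : ∀ m : ℕ, 1 ≤ m → {i : ℕ | h i ∈ Cone x₀ k k g m}.Infinite)
    (f : X → ℝ) (hf : GeomSO f) (Lg Lh : ℝ)
    (hLg : Tendsto (fun i => f (g i)) atTop (nhds Lg))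
    (hLh : Tendsto (fun i => f (h i)) atTop (nhds Lh)) :
    Lg = Lh := by
  apply eq_of_forall_dist_le
  intro ε hε
  obtain ⟨hb, -, -, hc⟩ := hf
  obtain ⟨m, hm, hd⟩ := hc (ε / 3) (by positivity) k hk x₀ g hg hg1
  obtain ⟨Ng, hNg⟩ := Metric.tendsto_atTop.1 hLg (ε / 3) (by positivity)
  obtain ⟨Nh, hNh⟩ := Metric.tendsto_atTop.1 hLh (ε / 3) (by positivity)
  obtain ⟨i, hi, hiN⟩ := (hinf m hm).exists_gt Nh
  have h1 := hNh i hiN.le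
  have h2 := hNg (max m Ng) (le_max_right _ _)
  have hgc : g (max m Ng) ∈ Cone x₀ k k g m :=
    ⟨g, max m Ng, max m Ng, fun x hx y hy => hg x hx.1 y hy.1, hg1, fun _ _ _ => rfl,
      le_max_left _ _, le_rfl, rfl⟩
  have hbd : Bornology.IsBounded (f '' Cone x₀ k k g m) :=
    hb.subset (Set.image_subset_range _ _)
  have h3 := Metric.dist_le_diam_of_mem hbd (Set.mem_image_of_mem f hgc)
    (Set.mem_image_of_mem f hi)
  have h4 := dist_triangle4 Lg (f (g (max m Ng))) (f (h i)) Lh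
  rw [dist_comm Lg (f _)] at h4
  linarith
end

section
/- Let X be a metric space and let g and h be integral quasi-geodesic rays in X whose images are at finite Hausdorff distance from each other. Then for every geometrically slowly-oscillating function f : X → ℂ one has lim_{i→∞} f(g(i)) = lim_{i→∞} f(h(i)); that is, g and h converge to the same point of the quasi-geodesic boundary. -/
open Filter Metric

/-- Corollary 4.9: integral quasi-geodesic rays at finite Hausdorff distance converge to
the same point of the quasi-geodesic boundary. -/
theorem stmt_11 {X : Type*} [MetricSpace X] (g h : ℕ → X)
    (hg : ∃ q Q : ℝ, 1 ≤ q ∧ 0 ≤ Q ∧ IsQGRay q Q g)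
    (hh : ∃ q Q : ℝ, 1 ≤ q ∧ 0 ≤ Q ∧ IsQGRay q Q h)
    (hd : EMetric.hausdorffEdist (g '' {i | 1 ≤ i}) (h '' {i | 1 ≤ i}) ≠ ⊤)
    (f : X → ℂ) (hf : GeomSO f) (Lg Lh : ℂ)
    (hLg : Tendsto (fun i => f (g i)) atTop (nhds Lg))
    (hLh : Tendsto (fun i => f (h i)) atTop (nhds Lh)) :
    Lg = Lh := by
  obtain ⟨q, Q, hq, hQ, hg⟩ := hg
  obtain ⟨q', Q', hq', hQ', hh⟩ := hh
  obtain ⟨M, hM0, hM⟩ : ∃ M : ℝ, 0 < M ∧ ∀ i, 1 ≤ i → ∃ j, 1 ≤ j ∧ dist (g i) (h j) < M := by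
    refine ⟨(EMetric.hausdorffEdist (g '' {i | 1 ≤ i}) (h '' {i | 1 ≤ i})).toReal + 1, by positivity, ?_⟩
    intro i hi
    have hlt : EMetric.hausdorffEdist (g '' {i | 1 ≤ i}) (h '' {i | 1 ≤ i}) <
        ENNReal.ofReal ((EMetric.hausdorffEdist (g '' {i | 1 ≤ i}) (h '' {i | 1 ≤ i})).toReal + 1) := by
      rw [ENNReal.lt_ofReal_iff_toReal_lt hd]
      linarith
    obtain ⟨y, ⟨j, hj, rfl⟩, hy⟩ := EMetric.exists_edist_lt_of_hausdorffEdist_lt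
      (Set.mem_image_of_mem g (show i ∈ {i | 1 ≤ i} from hi)) hlt
    exact ⟨j, hj, edist_lt_ofReal.1 hy⟩
  have hM' : ∀ i : ℕ, ∃ j, 1 ≤ j ∧ dist (g (i + 1)) (h j) < M := fun i => hM _ (by omega)
  choose j hj1 hj using hM'
  have hcast : Tendsto (fun i : ℕ => (i : ℝ)) atTop atTop := tendsto_natCast_atTop_atTop
  have hgt : Tendsto (fun i : ℕ => dist (g 1) (g (i + 1))) atTop atTop := by
    have h1 : Tendsto (fun i : ℕ => (i : ℝ) / q + (-Q)) atTop atTop :=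
      tendsto_atTop_add_const_right _ _ (hcast.atTop_div_const (by linarith))
    refine tendsto_atTop_mono (fun i => ?_) h1
    have := (hg 1 (le_refl 1) (i + 1) (by simp)).1
    have e : |((1 : ℕ) : ℝ) - ((i + 1 : ℕ) : ℝ)| = i := by
      push_cast
      rw [show (1 : ℝ) - (i + 1) = -i by ring, abs_neg, abs_of_nonneg (by positivity)]
    rw [e] at this
    linarith
  have hjt : Tendsto (fun i => (j i : ℝ)) atTop atTop := by
    have h1 : Tendsto (fun i : ℕ => (dist (g 1) (g (i + 1)) +
        (-(dist (g 1) (h 1) + M + Q'))) / q') atTop atTop :=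
      (tendsto_atTop_add_const_right _ _ hgt).atTop_div_const (by linarith)
    refine tendsto_atTop_mono (fun i => ?_) h1
    rw [div_le_iff₀ (by linarith)]
    have h2 := (hh 1 (le_refl 1) (j i) (hj1 i)).2
    have e : |((1 : ℕ) : ℝ) - (j i : ℝ)| ≤ j i := by
      have : (1 : ℝ) ≤ j i := by exact_mod_cast hj1 i
      push_cast
      rw [abs_le]
      constructor <;> linarith
    have h3 := mul_le_mul_of_nonneg_left e (show 0 ≤ q' by linarith)
    have h4 := dist_triangle4 (g 1) (h 1) (h (j i)) (g (i + 1))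
    rw [dist_comm (h (j i))] at h4
    have := hj i
    linarith
  have hjt' : Tendsto j atTop atTop := tendsto_natCast_atTop_iff.1 hjt
  have key := hf.2.2.1 (g 1) (fun i => g (i + 1)) (fun i => h (j i)) hgt
    ⟨M, hM0, fun n _ => hj n⟩
  have h1 : Tendsto (fun i => f (g (i + 1))) atTop (nhds Lg) := hLg.comp (tendsto_add_atTop_nat 1)
  have h2 : Tendsto (fun i => f (h (j i))) atTop (nhds Lh) := hLh.comp hjt'
  exact dist_eq_zero.1 (tendsto_nhds_unique (h1.dist h2) key)
end

section
/- The quasi-geodesic boundary of the Euclidean plane ℝ² is a single point: for any two integral quasi-geodesic rays g and h in ℝ² and every geometrically slowly-oscillating function f : ℝ² → ℂ, one has lim_{i→∞} f(g(i)) = lim_{i→∞} f(h(i)). -/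
open Filter Metric

lemma qg_of_le {X : Type*} [MetricSpace X] {q Q : ℝ} {g : ℕ → X} {s : Set ℕ}
    (H : ∀ x ∈ s, ∀ y ∈ s, x ≤ y → ((y : ℝ) - x) / q - Q ≤ dist (g x) (g y) ∧
      dist (g x) (g y) ≤ q * ((y : ℝ) - x) + Q) : IsQGOn q Q g s := by
  intro x hx y hy
  rcases le_total x y with h | h
  · have h' : (x : ℝ) ≤ y := by exact_mod_cast h
    rw [abs_sub_comm, abs_of_nonneg (by linarith)]
    exact H x hx y hy h
  · have h' : (y : ℝ) ≤ x := by exact_mod_cast h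
    rw [abs_of_nonneg (by linarith), dist_comm]
    exact H y hy x hx h

lemma qg_mono {X : Type*} [MetricSpace X] {q Q K : ℝ} {g : ℕ → X} {s : Set ℕ}
    (hq : 1 ≤ q) (h1 : q ≤ K) (h2 : Q ≤ K) (H : IsQGOn q Q g s) : IsQGOn K K g s := by
  intro x hx y hy
  obtain ⟨a, b⟩ := H x hx y hy
  have h3 : |(x : ℝ) - y| / K ≤ |(x : ℝ) - y| / q :=
    div_le_div_of_nonneg_left (abs_nonneg _) (by linarith) h1
  have h4 : q * |(x : ℝ) - y| ≤ K * |(x : ℝ) - y| :=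
    mul_le_mul_of_nonneg_right h1 (abs_nonneg _)
  constructor <;> linarith

lemma cone_dist {X E : Type*} [MetricSpace X] [PseudoMetricSpace E] {f : X → E}
    (hf : GeomSO f) {S : Set X} {x y : X} (hx : x ∈ S) (hy : y ∈ S) :
    dist (f x) (f y) ≤ Metric.diam (f '' S) :=
  Metric.dist_le_diam_of_mem (hf.1.subset (Set.image_subset_range f S))
    (Set.mem_image_of_mem f hx) (Set.mem_image_of_mem f hy)

lemma self_mem_cone {X : Type*} [MetricSpace X] {k : ℝ} {g : ℕ → X} (hg : IsQGRay k k g)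
    {m i : ℕ} (hi : m ≤ i) : g i ∈ Cone (g 1) k k g m :=
  ⟨g, i, i, fun x hx y hy => hg x hx.1 y hy.1, rfl, fun _ _ _ => rfl, hi, le_rfl, rfl⟩

lemma exists_lim {X : Type*} [MetricSpace X] {f : X → ℂ}
    (hf : GeomSO f) {k : ℝ} (hk : 1 ≤ k) {g : ℕ → X} (hg : IsQGRay k k g) :
    ∃ L, Tendsto (fun i => f (g i)) atTop (nhds L) := by
  apply cauchySeq_tendsto_of_complete
  rw [Metric.cauchySeq_iff]
  intro ε hε
  obtain ⟨m, hm, hd⟩ := hf.2.2.2 ε hε k hk (g 1) g hg rfl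
  exact ⟨m, fun i hi j hj =>
    (cone_dist hf (self_mem_cone hg hi) (self_mem_cone hg hj)).trans_lt hd⟩

lemma ray_qg {u : EuclideanSpace ℝ (Fin 2)} (hu : ‖u‖ = 1) {k : ℝ} (hk : 1 ≤ k) :
    IsQGRay k k (fun i : ℕ => (i : ℝ) • u) := by
  apply qg_of_le
  intro x _ y _ hxy
  have h' : (x : ℝ) ≤ y := by exact_mod_cast hxy
  have : dist ((x : ℝ) • u) ((y : ℝ) • u) = y - x := by
    rw [dist_comm, dist_eq_norm, ← sub_smul, norm_smul, hu, mul_one, Real.norm_eq_abs,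
      abs_of_nonneg (by linarith)]
  simp only [this]
  have h1 : ((y : ℝ) - x) / k ≤ y - x := div_le_self (by linarith) hk
  constructor <;> nlinarith

lemma norm_lower {u v : EuclideanSpace ℝ (Fin 2)} (hu : ‖u‖ = 1) (hv : ‖v‖ = 1)
    {c : ℝ} (hc : 0 ≤ c) (hs : (inner ℝ u v) ^ 2 + c ^ 2 ≤ 1) (α β : ℝ) :
    c * |α| ≤ ‖α • u + β • v‖ ∧ c * |β| ≤ ‖α • u + β • v‖ := by
  have e : ‖α • u + β • v‖ ^ 2 = α ^ 2 + 2 * (α * β * inner ℝ u v) + β ^ 2 := by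
    rw [norm_add_sq_real, norm_smul, norm_smul, hu, hv, inner_smul_left, inner_smul_right]
    simp
    ring
  constructor
  · refine abs_le_of_sq_le_sq' ?_ (norm_nonneg _) |>.2
    rw [e, mul_pow, sq_abs]
    nlinarith [sq_nonneg (β + α * inner ℝ u v), mul_nonneg (sq_nonneg α) (sub_nonneg.2 hs)]
  · refine abs_le_of_sq_le_sq' ?_ (norm_nonneg _) |>.2
    rw [e, mul_pow, sq_abs]
    nlinarith [sq_nonneg (α + β * inner ℝ u v), mul_nonneg (sq_nonneg β) (sub_nonneg.2 hs)]

lemma rays_agree {f : EuclideanSpace ℝ (Fin 2) → ℂ} (hf : GeomSO f)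
    {u v : EuclideanSpace ℝ (Fin 2)} (hu : ‖u‖ = 1) (hv : ‖v‖ = 1)
    (hs : (inner ℝ u v) ^ 2 < 1) {Lu Lv : ℂ}
    (hLu : Tendsto (fun i : ℕ => f ((i : ℝ) • u)) atTop (nhds Lu))
    (hLv : Tendsto (fun i : ℕ => f ((i : ℝ) • v)) atTop (nhds Lv)) : Lu = Lv := by
  set c : ℝ := √(1 - (inner ℝ u v) ^ 2) with hc
  have hc0 : 0 < c := Real.sqrt_pos.2 (by linarith)
  have hc2 : c ^ 2 = 1 - (inner ℝ u v) ^ 2 := Real.sq_sqrt (by linarith)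
  have hc1 : c ≤ 1 := by nlinarith [sq_nonneg (inner ℝ u v)]
  have hk3 : 3 ≤ 3 / c := by rw [le_div_iff₀ hc0]; linarith
  have hk : 1 ≤ 3 / c := by linarith
  apply eq_of_forall_dist_le
  intro ε hε
  obtain ⟨m, hm, hd⟩ := hf.2.2.2 ε hε (3 / c) hk _ _ (ray_qg hu hk) rfl
  refine le_of_tendsto (hLu.dist hLv) ?_
  filter_upwards [eventually_ge_atTop m] with M hM
  refine (cone_dist hf (self_mem_cone (ray_qg hu hk) hM) ?_).trans hd.le
  refine ⟨fun j => (((min j M : ℕ) : ℝ) - ((j - M : ℕ) : ℝ)) • u + ((j - M : ℕ) : ℝ) • v,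
    2 * M, 2 * M, ?_, ?_, ?_, by omega, le_rfl, ?_⟩
  · apply qg_of_le
    intro i _ j _ hij
    obtain ⟨a, ha⟩ : ∃ a : ℕ, min j M = min i M + a := ⟨min j M - min i M, by omega⟩
    obtain ⟨t, ht⟩ : ∃ t : ℕ, j - M = i - M + t := ⟨(j - M) - (i - M), by omega⟩
    have hat : j = i + (a + t) := by omega
    have hji : (j : ℝ) - i = a + t := by rw [hat]; push_cast; ring
    have hD : dist ((((min i M : ℕ) : ℝ) - ((i - M : ℕ) : ℝ)) • u + ((i - M : ℕ) : ℝ) • v)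
        ((((min j M : ℕ) : ℝ) - ((j - M : ℕ) : ℝ)) • u + ((j - M : ℕ) : ℝ) • v)
        = ‖((a : ℝ) - t) • u + (t : ℝ) • v‖ := by
      rw [dist_comm, dist_eq_norm, ha, ht, Nat.cast_add, Nat.cast_add]
      congr 1
      module
    simp only [hD, hji]
    obtain ⟨h1, h2⟩ := norm_lower hu hv hc0.le (by linarith) ((a : ℝ) - t) (t : ℝ)
    have h3 : ‖((a : ℝ) - t) • u + (t : ℝ) • v‖ ≤ |(a : ℝ) - t| + t := by
      refine (norm_add_le _ _).trans ?_
      rw [norm_smul, norm_smul, hu, hv]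
      simp
    have ha0 : (0 : ℝ) ≤ a := Nat.cast_nonneg a
    have ht0 : (0 : ℝ) ≤ t := Nat.cast_nonneg t
    have h4 : |(a : ℝ) - t| ≤ a + t := by rw [abs_le]; constructor <;> linarith
    have h5 := mul_le_mul_of_nonneg_left (le_abs_self ((a : ℝ) - t)) hc0.le
    rw [abs_of_nonneg ht0] at h2
    constructor
    · have : ((a : ℝ) + t) / (3 / c) = c * (a + t) / 3 := by field_simp
      rw [this]
      nlinarith
    · nlinarith
  · have h1 : min 1 M = 1 := by omega
    have h2 : 1 - M = 0 := by omega
    simp [h1, h2]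
  · intro j _ hj
    have h1 : min j M = j := by omega
    have h2 : j - M = 0 := by omega
    simp [h1, h2]
  · have h1 : min (2 * M) M = M := by omega
    have h2 : 2 * M - M = M := by omega
    simp [h1, h2]

lemma rays_agree' {f : EuclideanSpace ℝ (Fin 2) → ℂ} (hf : GeomSO f)
    {u v : EuclideanSpace ℝ (Fin 2)} (hu : ‖u‖ = 1) (hv : ‖v‖ = 1) {Lu Lv : ℂ}
    (hLu : Tendsto (fun i : ℕ => f ((i : ℝ) • u)) atTop (nhds Lu))
    (hLv : Tendsto (fun i : ℕ => f ((i : ℝ) • v)) atTop (nhds Lv)) : Lu = Lv := by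
  by_cases hs : (inner ℝ u v) ^ 2 < 1
  · exact rays_agree hf hu hv hs hLu hLv
  set w : EuclideanSpace ℝ (Fin 2) := !₂[-u 1, u 0] with hw
  have eu : u 0 ^ 2 + u 1 ^ 2 = 1 := by
    have := EuclideanSpace.real_norm_sq_eq u
    rw [hu, Fin.sum_univ_two] at this; linarith
  have ev : v 0 ^ 2 + v 1 ^ 2 = 1 := by
    have := EuclideanSpace.real_norm_sq_eq v
    rw [hv, Fin.sum_univ_two] at this; linarith
  have hwn : ‖w‖ = 1 := by
    have := EuclideanSpace.real_norm_sq_eq w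
    rw [Fin.sum_univ_two] at this
    simp [hw] at this
    rw [← hw] at this
    have h0 := norm_nonneg w
    nlinarith
  have i1 : inner ℝ u w = 0 := by
    simp [PiLp.inner_apply, Fin.sum_univ_two, hw]; ring
  have i2 : inner ℝ w v = u 0 * v 1 - u 1 * v 0 := by
    simp [PiLp.inner_apply, Fin.sum_univ_two, hw]; ring
  have i3 : inner ℝ u v = u 0 * v 0 + u 1 * v 1 := by
    simp [PiLp.inner_apply, Fin.sum_univ_two]; ring
  have i4 : (inner ℝ w v) ^ 2 + (inner ℝ u v) ^ 2 = 1 := by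
    rw [i2, i3]
    linear_combination (v 0 ^ 2 + v 1 ^ 2) * eu + ev
  obtain ⟨Lw, hLw⟩ := exists_lim hf le_rfl (ray_qg hwn le_rfl)
  exact (rays_agree hf hu hwn (by rw [i1]; norm_num) hLu hLw).trans
    (rays_agree hf hwn hv (by linarith) hLw hLv)

lemma ray_lim_eq {f : EuclideanSpace ℝ (Fin 2) → ℂ} (hf : GeomSO f) {L : ℂ}
    (hL : ∀ u : EuclideanSpace ℝ (Fin 2), ‖u‖ = 1 →
      Tendsto (fun i : ℕ => f ((i : ℝ) • u)) atTop (nhds L))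
    {k : ℝ} (hk : 1 ≤ k) {g : ℕ → EuclideanSpace ℝ (Fin 2)} (hg : IsQGRay k k g) {Lg : ℂ}
    (hLg : Tendsto (fun i => f (g i)) atTop (nhds Lg)) : Lg = L := by
  have hg' : IsQGRay (3 * k) (3 * k) g := qg_mono hk (by linarith) (by linarith) hg
  have hk0 : 0 < k := by linarith
  have hinf : Tendsto (fun i => ‖g i‖) atTop atTop := by
    have h1 : Tendsto (fun i : ℕ => (i : ℝ) / k + (- (1 / k) - k - ‖g 1‖)) atTop atTop :=
      tendsto_atTop_add_const_right _ _
        (tendsto_natCast_atTop_atTop.atTop_div_const hk0)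
    refine tendsto_atTop_mono' _ ?_ h1
    filter_upwards [eventually_ge_atTop 1] with i hi
    have h2 := (hg i hi 1 (by simp)).1
    have h3 : (1 : ℝ) ≤ i := by exact_mod_cast hi
    rw [Nat.cast_one, abs_of_nonneg (by linarith), sub_div] at h2
    have h4 := dist_le_norm_add_norm (g i) (g 1)
    linarith
  apply eq_of_forall_dist_le
  intro ε hε
  obtain ⟨m, hm, hd⟩ := hf.2.2.2 (ε / 2) (by linarith) (3 * k) (by linarith) _ _ hg' rfl
  obtain ⟨N, hN⟩ := (Metric.tendsto_atTop.1 hLg) (ε / 2) (by linarith)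
  obtain ⟨n, hn, hrec⟩ := high_scores hinf (max m N)
  have hnm : m ≤ n := le_trans (le_max_left _ _) hn
  have hnN : N ≤ n := le_trans (le_max_right _ _) hn
  set R := ‖g n‖ with hR
  have hR0 : 0 < R := (norm_nonneg (g 0)).trans_lt (hrec 0 (by omega))
  set u := R⁻¹ • g n with hu
  have hun : ‖u‖ = 1 := by
    rw [hu, norm_smul, ← hR, norm_inv, Real.norm_of_nonneg hR0.le, inv_mul_cancel₀ hR0.ne']
  have hgu : g n = R • u := by rw [hu, smul_smul, mul_inv_cancel₀ hR0.ne', one_smul]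
  have key : dist (f (g n)) L ≤ ε / 2 := by
    refine le_of_tendsto (tendsto_const_nhds.dist (hL u hun)) ?_
    filter_upwards [eventually_gt_atTop ⌈R⌉₊] with l hl
    refine (cone_dist hf (self_mem_cone hg' hnm) ?_).trans hd.le
    obtain ⟨s, rfl⟩ : ∃ s, l = ⌈R⌉₊ + s := ⟨l - ⌈R⌉₊, by omega⟩
    have hc1 : R ≤ ⌈R⌉₊ := Nat.le_ceil R
    have hc2 : (⌈R⌉₊ : ℝ) < R + 1 := Nat.ceil_lt_add_one hR0.le
    refine ⟨fun j => if j ≤ n then g j else ((⌈R⌉₊ + (j - n) : ℕ) : ℝ) • u, n + s, n + s,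
      ?_, ?_, ?_, by omega, le_rfl, ?_⟩
    · apply qg_of_le
      intro i hi j hj hij
      have hij' : (i : ℝ) ≤ j := by exact_mod_cast hij
      by_cases hjn : j ≤ n
      · have hin : i ≤ n := hij.trans hjn
        simp only [hjn, hin, if_true]
        have := hg' i hi.1 j hj.1
        rwa [abs_sub_comm, abs_of_nonneg (by linarith)] at this
      · by_cases hin : i ≤ n
        · simp only [hjn, hin, if_true, if_false]
          obtain ⟨t, rfl⟩ : ∃ t, j = n + t := ⟨j - n, by omega⟩
          rw [show n + t - n = t by omega]
          have hin' : (i : ℝ) ≤ n := by exact_mod_cast hin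
          have ht0 : (0 : ℝ) ≤ t := Nat.cast_nonneg t
          obtain ⟨b1, b2⟩ := hg i hi.1 n (by simp; omega)
          rw [abs_sub_comm, abs_of_nonneg (by linarith)] at b1 b2
          have hgi : ‖g i‖ ≤ R := by
            rcases hin.lt_or_eq with h | h
            · exact (hrec i h).le
            · rw [h]
          set P := ((⌈R⌉₊ + t : ℕ) : ℝ) • u with hP
          have hPn : ‖P‖ = ⌈R⌉₊ + t := by
            rw [hP, norm_smul, hun, mul_one, Real.norm_natCast]; push_cast; rfl
          have hPg : dist (g n) P = ⌈R⌉₊ + t - R := by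
            rw [hgu, hP, dist_comm, dist_eq_norm, ← sub_smul, norm_smul, hun, mul_one,
              Real.norm_eq_abs, Nat.cast_add, abs_of_nonneg (by linarith)]
          have d1 : ‖P‖ - ‖g i‖ ≤ dist (g i) P := by
            rw [dist_comm, dist_eq_norm]; exact norm_sub_norm_le _ _
          have d2 := dist_triangle (g i) (g n) P
          have d3 := dist_triangle (g i) P (g n)
          rw [dist_comm P] at d3
          push_cast
          constructor
          · have e1 : ((n : ℝ) + t - i) / (3 * k) = ((n - i) / k + t / k) / 3 := by
              field_simp; ring
            have e2 : (t : ℝ) / k ≤ t := div_le_self ht0 hk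
            rw [e1]
            linarith
          · nlinarith
        · simp only [hjn, hin, if_false]
          have : dist (((⌈R⌉₊ + (i - n) : ℕ) : ℝ) • u) (((⌈R⌉₊ + (j - n) : ℕ) : ℝ) • u)
              = j - i := by
            rw [dist_comm, dist_eq_norm, ← sub_smul, norm_smul, hun, mul_one,
              Real.norm_eq_abs]
            push_cast [Nat.cast_sub (show n ≤ i by omega), Nat.cast_sub (show n ≤ j by omega)]
            rw [show (⌈R⌉₊ + ((j : ℝ) - n) - (⌈R⌉₊ + ((i : ℝ) - n))) = j - i by ring,
              abs_of_nonneg (by linarith)]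
          rw [this]
          have h1 : ((j : ℝ) - i) / (3 * k) ≤ j - i := div_le_self (by linarith) (by linarith)
          constructor <;> nlinarith
    · simp only [show 1 ≤ n by omega, if_true]
    · intro j _ hj
      simp only [show j ≤ n by omega, if_true]
    · have hs : ¬ (n + s ≤ n) := by omega
      simp only [hs, if_false]
      rw [show n + s - n = s by omega]
  have h1 := hN n hnN
  rw [dist_comm] at h1
  linarith [dist_triangle Lg (f (g n)) L]

/-- Corollary 4.10: the quasi-geodesic boundary of the Euclidean plane is one point. -/
theorem stmt_12 (g h : ℕ → EuclideanSpace ℝ (Fin 2))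
    (hg : ∃ q Q : ℝ, 1 ≤ q ∧ 0 ≤ Q ∧ IsQGRay q Q g)
    (hh : ∃ q Q : ℝ, 1 ≤ q ∧ 0 ≤ Q ∧ IsQGRay q Q h)
    (f : EuclideanSpace ℝ (Fin 2) → ℂ) (hf : GeomSO f) (Lg Lh : ℂ)
    (hLg : Tendsto (fun i => f (g i)) atTop (nhds Lg))
    (hLh : Tendsto (fun i => f (h i)) atTop (nhds Lh)) :
    Lg = Lh := by
  obtain ⟨L, hL⟩ : ∃ L : ℂ, ∀ u : EuclideanSpace ℝ (Fin 2), ‖u‖ = 1 →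
      Tendsto (fun i : ℕ => f ((i : ℝ) • u)) atTop (nhds L) := by
    have hw : ‖(EuclideanSpace.single 0 1 : EuclideanSpace ℝ (Fin 2))‖ = 1 := by simp
    obtain ⟨L, hL⟩ := exists_lim hf le_rfl (ray_qg hw le_rfl)
    refine ⟨L, fun u hu => ?_⟩
    obtain ⟨L', hL'⟩ := exists_lim hf le_rfl (ray_qg hu le_rfl)
    rwa [rays_agree' hf hw hu hL hL']
  have main : ∀ (g : ℕ → EuclideanSpace ℝ (Fin 2)) (Lg : ℂ),
      (∃ q Q : ℝ, 1 ≤ q ∧ 0 ≤ Q ∧ IsQGRay q Q g) →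
      Tendsto (fun i => f (g i)) atTop (nhds Lg) → Lg = L := by
    rintro g Lg ⟨q, Q, hq, hQ, hg⟩ hLg
    exact ray_lim_eq hf hL (hq.trans (le_max_left q Q))
      (qg_mono hq (le_max_left q Q) (le_max_right q Q) hg) hLg
  rw [main g Lg hg hLg, main h Lh hh hLh]
end

section
/- Let X and Y be metric spaces in which any two distinct points are at distance at least 1, and let φ : X → Y be a bijection which is a quasi-isometry, i.e., there exist λ ≥ 1 and A ≥ 0 such that (1/λ)·d_X(x,x') − A ≤ d_Y(φ(x),φ(x')) ≤ λ·d_X(x,x') + A for all x, x' ∈ X. Then a function g : Y → ℂ is geometrically slowly-oscillating if and only if g ∘ φ : X → ℂ is geometrically slowly-oscillating. -/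
open Filter Metric

theorem geomSO_comp_aux {X Y : Type*} [MetricSpace X] [MetricSpace Y]
    (hX : ∀ x x' : X, x ≠ x' → 1 ≤ dist x x')
    (φ : X → Y) (lam A : ℝ) (hlam : 1 ≤ lam) (hA : 0 ≤ A)
    (hqi : ∀ x x' : X, dist x x' / lam - A ≤ dist (φ x) (φ x') ∧
      dist (φ x) (φ x') ≤ lam * dist x x' + A)
    (g : Y → ℂ) (hg : GeomSO g) : GeomSO (g ∘ φ) := by
  obtain ⟨hb, -, hs, hc⟩ := hg
  have hl0 : 0 < lam := by linarith
  refine ⟨hb.subset (Set.range_comp_subset_range φ g), ?_, ?_, ?_⟩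
  · rw [Metric.continuous_iff]
    intro b ε hε
    refine ⟨1, one_pos, fun a ha => ?_⟩
    have : a = b := by
      by_contra h
      exact absurd (hX a b h) (not_le.mpr ha)
    simpa [this] using hε
  · rintro x₀ x y hx ⟨M, hM, hxy⟩
    refine hs (φ x₀) (fun n => φ (x n)) (fun n => φ (y n)) ?_ ⟨lam * M + A, by positivity, ?_⟩
    · refine tendsto_atTop_mono (fun n => (hqi x₀ (x n)).1) ?_
      exact tendsto_atTop_add_const_right _ (-A) (hx.atTop_div_const hl0)
    · intro n hn
      have h1 := (hqi (x n) (y n)).2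
      have h2 := mul_lt_mul_of_pos_left (hxy n hn) hl0
      show dist (φ (x n)) (φ (y n)) < _
      linarith
  · intro ε hε k hk x₀ r hr hr1
    have hk0 : 0 < k := by linarith
    have hkl : k ≤ lam * k := by nlinarith
    have key : ∀ (h : ℕ → X) (s : Set ℕ), IsQGOn k k h s →
        IsQGOn (lam * k + A) (lam * k + A) (φ ∘ h) s := by
      intro h s hh i hi j hj
      obtain ⟨h1, h2⟩ := hh i hi j hj
      obtain ⟨h3, h4⟩ := hqi (h i) (h j)
      have ht : 0 ≤ |(i : ℝ) - (j : ℝ)| := abs_nonneg _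
      simp only [Function.comp]
      generalize |(i : ℝ) - (j : ℝ)| = t at *
      constructor
      · have e1 : (t / k - k) / lam ≤ dist (h i) (h j) / lam := by gcongr
        have e2 : (t / k - k) / lam = t / (lam * k) - k / lam := by field_simp
        have e3 : k / lam ≤ k := div_le_self hk0.le hlam
        have e4 : t / (lam * k + A) ≤ t / (lam * k) := by
          apply div_le_div_of_nonneg_left ht (by positivity); linarith
        linarith
      · have e1 := mul_le_mul_of_nonneg_left h2 hl0.le
        have e2 : 0 ≤ A * t := by positivity
        nlinarith
    obtain ⟨m, hm, hd⟩ := hc ε hε (lam * k + A) (by linarith) (φ x₀) (φ ∘ r) (key r _ hr)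
      (by simp [hr1])
    refine ⟨m, hm, lt_of_le_of_lt (Metric.diam_mono ?_ ?_) hd⟩
    · rintro _ ⟨_, ⟨h, n, i, hh, h1, hj, hmi, hin, rfl⟩, rfl⟩
      refine ⟨φ (h i), ⟨φ ∘ h, n, i, key h _ hh, by simp [h1], ?_, hmi, hin, rfl⟩, rfl⟩
      intro j hj1 hj2
      simp [hj j hj1 hj2]
    · exact hb.subset (Set.image_subset_range _ _)

/-- Proposition 4.12 (key step): for a quasi-isometric bijection between 1-discrete spaces,
g is geometrically slowly-oscillating iff g ∘ φ is. -/
theorem stmt_13 {X Y : Type*} [MetricSpace X] [MetricSpace Y]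
    (hX : ∀ x x' : X, x ≠ x' → 1 ≤ dist x x')
    (hY : ∀ y y' : Y, y ≠ y' → 1 ≤ dist y y')
    (φ : X → Y) (hbij : Function.Bijective φ)
    (lam A : ℝ) (hlam : 1 ≤ lam) (hA : 0 ≤ A)
    (hqi : ∀ x x' : X, dist x x' / lam - A ≤ dist (φ x) (φ x') ∧
      dist (φ x) (φ x') ≤ lam * dist x x' + A)
    (g : Y → ℂ) :
    GeomSO g ↔ GeomSO (g ∘ φ) := by
  refine ⟨geomSO_comp_aux hX φ lam A hlam hA hqi g, fun h => ?_⟩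
  have hl0 : 0 < lam := by linarith
  obtain ⟨ψ, -, hψ⟩ := Function.bijective_iff_has_inverse.mp hbij
  have h2 := geomSO_comp_aux hY ψ lam (lam * A) hlam (by positivity) (fun y y' => by
    obtain ⟨h1, h2⟩ := hqi (ψ y) (ψ y')
    rw [hψ y, hψ y'] at h1 h2
    constructor
    · have e1 : dist y y' / lam ≤ (lam * dist (ψ y) (ψ y') + A) / lam := by gcongr
      have e2 : (lam * dist (ψ y) (ψ y') + A) / lam = dist (ψ y) (ψ y') + A / lam := by field_simp
      have e3 : A / lam ≤ A := div_le_self hA hlam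
      nlinarith
    · have e1 : dist (ψ y) (ψ y') / lam ≤ dist y y' + A := by linarith
      rw [div_le_iff₀ hl0] at e1
      linarith) (g ∘ φ) h
  have e : (g ∘ φ) ∘ ψ = g := by
    funext y
    simp [hψ y]
  rwa [e] at h2
end

section
/- If X and Y are proper unbounded integrally quasi-geodesic metric spaces, then the cartesian product X × Y with the ℓ₁-metric has trivial quasi-geodesic boundary: for any two integral quasi-geodesic rays g and h in X × Y and every geometrically slowly-oscillating function f : X × Y → ℂ, one has lim_{i→∞} f(g(i)) = lim_{i→∞} f(h(i)). -/
open Filter Metric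

theorem surgery {Z : Type*} (N : Z → Z → ℕ)
    (symm : ∀ x y, N x y = N y x) (tri : ∀ x y z, N x z ≤ N x y + N y z)
    (self : ∀ x, N x x = 0)
    (geo : ∀ x y, ∃ c : ℕ → Z, c 0 = x ∧ c (N x y) = y ∧
      ∀ i j, i ≤ j → j ≤ N x y → N (c i) (c j) ≤ j - i)
    (K C J L m : ℕ) (hK : 1 ≤ K) (hJ : 1 ≤ J) (g σ : ℕ → Z)
    (hg1 : ∀ i, 1 ≤ i → N (g i) (g (i+1)) ≤ 1)
    (hg2 : ∀ i j, 1 ≤ i → i ≤ j → j ≤ J → j - i ≤ K * N (g i) (g j) + C)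
    (hs1 : ∀ i, i < L → N (σ i) (σ (i+1)) ≤ 1)
    (hs2 : ∀ i j, i ≤ j → j ≤ L → j - i ≤ K * N (σ i) (σ j) + C)
    (h0 : σ 0 = g J)
    (hfar : ∀ s t, 1 ≤ s → s ≤ m → t ≤ L → J + L < K * N (g s) (σ t)) :
    ∃ (w : ℕ → Z) (T : ℕ), m ≤ T ∧ 1 ≤ T ∧ w 1 = g 1 ∧ (∀ i, 1 ≤ i → i ≤ m → w i = g i) ∧ w T = σ L ∧
      (∀ i, 1 ≤ i → i < T → N (w i) (w (i+1)) ≤ 1) ∧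
      (∀ i j, 1 ≤ i → i ≤ j → j ≤ T → j - i ≤ K * N (w i) (w j) + C) := by
  have hne : (Finset.Icc 1 J ×ˢ Finset.Icc 0 L).Nonempty :=
    ⟨(J, 0), by simp [hJ]⟩
  obtain ⟨⟨s0, t0⟩, hmem, hmin⟩ := Finset.exists_min_image _
    (fun p : ℕ × ℕ => K * N (g p.1) (σ p.2) + p.1 + (L - p.2)) hne
  simp only [Finset.mem_product, Finset.mem_Icc, Prod.forall] at hmem hmin
  obtain ⟨⟨hs0, hs0J⟩, -, ht0⟩ := hmem
  have hms : m < s0 := by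
    by_contra hcon
    have h1 := hfar s0 t0 hs0 (by omega) ht0
    have h2 := hmin J 0 ⟨⟨hJ, le_rfl⟩, by omega, by omega⟩
    rw [h0, self] at h2
    omega
  obtain ⟨c, hc0, hcn, hc⟩ := geo (g s0) (σ t0)
  generalize hn : N (g s0) (σ t0) = n at *
  -- key estimates
  have hcc : ∀ i j, i ≤ j → j ≤ n → j - i ≤ N (c i) (c j) := by
    intro i j hij hj
    have a1 := tri (c 0) (c i) (c n)
    have a2 := tri (c i) (c j) (c n)
    have a3 := hc 0 i (by omega) (by omega)
    have a4 := hc j n hj le_rfl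
    rw [hc0, hcn, hn] at a1
    rw [hc0] at a3
    rw [hcn] at a2 a4
    omega
  have hgs : ∀ s t, 1 ≤ s → s ≤ s0 → t0 ≤ t → t ≤ L →
      K * n + (s0 - s) + (t - t0) ≤ K * N (g s) (σ t) := by
    intro s t h1 h2 h3 h4
    have := hmin s t ⟨⟨h1, by omega⟩, by omega, h4⟩
    omega
  have hgc : ∀ s i, 1 ≤ s → s ≤ s0 → i ≤ n → i + (s0 - s) ≤ K * N (g s) (c i) := by
    intro s i h1 h2 h3
    have a1 := hgs s t0 h1 h2 le_rfl ht0
    have a2 := tri (g s) (c i) (σ t0)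
    have a3 := hc i n h3 le_rfl
    rw [hcn] at a3
    have a4 : K * N (g s) (σ t0) ≤ K * (N (g s) (c i) + (n - i)) :=
      Nat.mul_le_mul_left _ (by omega)
    obtain ⟨e, rfl⟩ := Nat.exists_eq_add_of_le h3
    have : i + e - i = e := by omega
    rw [this] at a4
    nlinarith
  have hcs : ∀ i t, i ≤ n → t0 ≤ t → t ≤ L → (n - i) + (t - t0) ≤ K * N (c i) (σ t) := by
    intro i t h1 h2 h3
    have a1 := hgs s0 t hs0 le_rfl h2 h3
    have a2 := tri (g s0) (c i) (σ t)
    have a3 := hc 0 i (by omega) h1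
    rw [hc0] at a3
    have a4 : K * N (g s0) (σ t) ≤ K * (i + N (c i) (σ t)) :=
      Nat.mul_le_mul_left _ (by omega)
    obtain ⟨e, rfl⟩ := Nat.exists_eq_add_of_le h1
    have : i + e - i = e := by omega
    rw [this]
    nlinarith
  let w : ℕ → Z := fun i => if i ≤ s0 then g i else if i ≤ s0 + n then c (i - s0)
    else σ (t0 + (i - s0 - n))
  have w1 : ∀ i, i ≤ s0 → w i = g i := fun i hi => by simp [w, hi]
  have w2 : ∀ i, i ≤ n → w (s0 + i) = c i := by
    intro i hi
    rcases Nat.eq_zero_or_pos i with rfl | hp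
    · rw [Nat.add_zero, w1 _ le_rfl, hc0]
    · have : ¬ (s0 + i ≤ s0) := by omega
      simp [w, this, hi]
  have w3 : ∀ i, w (s0 + n + i) = σ (t0 + i) := by
    intro i
    rcases Nat.eq_zero_or_pos i with rfl | hp
    · rw [Nat.add_zero, w2 _ le_rfl, hcn, Nat.add_zero]
    · have h1 : ¬ (s0 + n + i ≤ s0) := by omega
      have h2 : ¬ (s0 + n + i ≤ s0 + n) := by omega
      have h3 : s0 + n + i - s0 - n = i := by omega
      simp only [w, h1, h2, if_false, h3]
  have hcase : ∀ i, i < s0 ∨ (∃ j, j < n ∧ i = s0 + j) ∨ (∃ j, i = s0 + n + j) := by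
    intro i
    by_cases h1 : i < s0
    · exact Or.inl h1
    by_cases h2 : i < s0 + n
    · exact Or.inr (Or.inl ⟨i - s0, by omega, by omega⟩)
    · exact Or.inr (Or.inr ⟨i - s0 - n, by omega⟩)
  refine ⟨w, s0 + n + (L - t0), by omega, by omega, w1 1 hs0, fun i _ hi => w1 i (by omega), ?_, ?_, ?_⟩
  · rw [w3]; congr 1; omega
  · intro i hi hiT
    rcases hcase i with h | ⟨j, hj, rfl⟩ | ⟨j, rfl⟩
    · rw [w1 i h.le, w1 (i+1) h]; exact hg1 i hi
    · rw [add_assoc, w2 j hj.le, w2 (j+1) hj]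
      have := hc j (j+1) (by omega) hj
      omega
    · rw [add_assoc _ j 1, w3, w3]
      exact hs1 (t0 + j) (by omega)
  · intro i j hi hij hjT
    rcases hcase i with h | ⟨a, ha, rfl⟩ | ⟨a, rfl⟩ <;>
    rcases hcase j with h' | ⟨b, hb, rfl⟩ | ⟨b, rfl⟩
    · rw [w1 i h.le, w1 j h'.le]; exact hg2 i j hi hij (by omega)
    · rw [w1 i h.le, w2 b hb.le]
      have := hgc i b hi h.le hb.le
      omega
    · rw [w1 i h.le, w3]
      have := hgs i (t0 + b) hi h.le (by omega) (by omega)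
      have : n ≤ K * n := Nat.le_mul_of_pos_left _ hK
      omega
    · omega
    · rw [w2 a ha.le, w2 b hb.le]
      have := hcc a b (by omega) hb.le
      have h3 : N (c a) (c b) ≤ K * N (c a) (c b) := Nat.le_mul_of_pos_left _ hK
      omega
    · rw [w2 a ha.le, w3]
      have := hcs a (t0 + b) ha.le (by omega) (by omega)
      omega
    · omega
    · omega
    · rw [w3, w3]
      have := hs2 (t0 + a) (t0 + b) (by omega) (by omega)
      omega

theorem graphN {Z : Type*} [MetricSpace Z] [Nonempty Z] (D B : ℝ)
    (hc : ∀ p z : Z, ∃ (σ : ℕ → Z) (L : ℕ), σ 0 = p ∧ σ L = z ∧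
      (∀ i, i < L → dist (σ i) (σ (i+1)) ≤ D) ∧ (L : ℝ) ≤ B * dist p z + B) :
    ∃ N : Z → Z → ℕ, (∀ x y, N x y = N y x) ∧ (∀ x y z, N x z ≤ N x y + N y z) ∧
      (∀ x, N x x = 0) ∧ (∀ x y, ∃ c : ℕ → Z, c 0 = x ∧ c (N x y) = y ∧
      ∀ i j, i ≤ j → j ≤ N x y → N (c i) (c j) ≤ j - i) ∧
      (∀ x y, dist x y ≤ D → N x y ≤ 1) ∧ (∀ x y, dist x y ≤ D * N x y) ∧
      (∀ x y, (N x y : ℝ) ≤ B * dist x y + B) := by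
  classical
  let G : SimpleGraph Z :=
    { Adj := fun x y => x ≠ y ∧ dist x y ≤ D
      symm := ⟨fun x y h => ⟨h.1.symm, by rw [dist_comm]; exact h.2⟩⟩
      loopless := ⟨fun x h => h.1 rfl⟩ }
  have hle1 : ∀ x y, dist x y ≤ D → G.Reachable x y ∧ G.dist x y ≤ 1 := by
    intro x y h
    by_cases hxy : x = y
    · subst hxy; exact ⟨SimpleGraph.Reachable.refl _, by simp⟩
    · have : G.Adj x y := ⟨hxy, h⟩
      exact ⟨this.reachable, (SimpleGraph.dist_eq_one_iff_adj.2 this).le⟩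
  have hconn : G.Connected := by
    refine { preconnected := ?_, nonempty := inferInstance }
    intro p z
    obtain ⟨σ, L, h0, hL, hst, -⟩ := hc p z
    have : ∀ i, i ≤ L → G.Reachable (σ 0) (σ i) := by
      intro i
      induction i with
      | zero => intro _; exact SimpleGraph.Reachable.refl _
      | succ i ih => intro hi; exact (ih (by omega)).trans (hle1 _ _ (hst i hi)).1
    have := this L le_rfl
    rwa [h0, hL] at this
  refine ⟨G.dist, fun x y => SimpleGraph.dist_comm, fun x y z => hconn.dist_triangle, fun x => by simp, ?_, fun x y h => (hle1 x y h).2, ?_, ?_⟩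
  · intro x y
    obtain ⟨p, hp⟩ := hconn.exists_walk_length_eq_dist x y
    refine ⟨p.getVert, by simp, by rw [← hp]; simp, ?_⟩
    intro i j hij
    induction j, hij using Nat.le_induction with
    | base => intro _; simp
    | succ j hj ih =>
      intro h
      have h1 := ih (by omega)
      have h2 : G.Adj (p.getVert j) (p.getVert (j+1)) := p.adj_getVert_succ (by omega)
      have h3 := SimpleGraph.dist_eq_one_iff_adj.2 h2
      have h4 := hconn.dist_triangle (u := p.getVert i) (v := p.getVert j) (w := p.getVert (j+1))
      omega
  · intro x y
    obtain ⟨p, hp⟩ := hconn.exists_walk_length_eq_dist x y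
    rw [← hp]
    clear hp
    induction p with
    | nil => simp
    | @cons u v w h p ih =>
      have := dist_triangle u v w
      have h2 : dist u v ≤ D := h.2
      simp only [SimpleGraph.Walk.length_cons]
      push_cast
      linarith
  · intro x y
    obtain ⟨σ, L, h0, hL, hst, hLB⟩ := hc x y
    have : ∀ i, i ≤ L → G.dist (σ 0) (σ i) ≤ i := by
      intro i
      induction i with
      | zero => intro _; simp
      | succ i ih =>
        intro hi
        have h1 := ih (by omega)
        have h2 := (hle1 _ _ (hst i hi)).2
        have h4 := hconn.dist_triangle (u := σ 0) (v := σ i) (w := σ (i+1))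
        omega
    have := this L le_rfl
    rw [h0, hL] at this
    have : (G.dist x y : ℝ) ≤ L := by exact_mod_cast this
    linarith

theorem IsQGOn.mono' {X : Type*} [MetricSpace X] {q Q q' Q' : ℝ} {g : ℕ → X} {s : Set ℕ}
    (h : IsQGOn q Q g s) (hq : 1 ≤ q) (hqq : q ≤ q') (hQ : Q ≤ Q') : IsQGOn q' Q' g s := by
  intro x hx y hy
  obtain ⟨h1, h2⟩ := h x hx y hy
  have h3 : |(x:ℝ) - y| / q' ≤ |(x:ℝ) - y| / q :=
    div_le_div_of_nonneg_left (abs_nonneg _) (by linarith) hqq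
  have h4 : q * |(x:ℝ) - y| ≤ q' * |(x:ℝ) - y| :=
    mul_le_mul_of_nonneg_right hqq (abs_nonneg _)
  exact ⟨by linarith, by linarith⟩

theorem IsQGOn.lower {X : Type*} [MetricSpace X] {q Q : ℝ} {g : ℕ → X} {s : Set ℕ}
    (h : IsQGOn q Q g s) (hq : 1 ≤ q) {i j : ℕ} (hi : i ∈ s) (hj : j ∈ s) :
    (j : ℝ) - i ≤ q * (dist (g i) (g j) + Q) := by
  obtain ⟨h1, h2⟩ := h i hi j hj
  have h3 : |(i:ℝ) - j| / q ≤ dist (g i) (g j) + Q := by linarith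
  rw [div_le_iff₀ (by linarith)] at h3
  have := neg_abs_le ((i:ℝ) - j)
  linarith

theorem IsQGOn.step {X : Type*} [MetricSpace X] {q Q : ℝ} {g : ℕ → X} {s : Set ℕ}
    (h : IsQGOn q Q g s) {i : ℕ} (hi : i ∈ s) (hj : i + 1 ∈ s) :
    dist (g i) (g (i+1)) ≤ q + Q := by
  obtain ⟨h1, h2⟩ := h i hi _ hj
  have : |(i:ℝ) - ((i+1 : ℕ):ℝ)| = 1 := by push_cast; simp
  rw [this] at h2
  linarith

/-- points at prescribed distance, up to a constant -/
theorem exists_at_dist {X : Type*} [MetricSpace X]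
    (hXub : ¬ Bornology.IsBounded (Set.univ : Set X)) {q Q : ℝ} (hq : 1 ≤ q) (hQ : 0 ≤ Q)
    (hX : IntegrallyQGWith X q Q) (x0 : X) (r : ℝ) (hr : 0 ≤ r) :
    ∃ x, r ≤ dist x x0 ∧ dist x x0 ≤ r + (q + Q) := by
  classical
  obtain ⟨x, hx⟩ : ∃ x, r ≤ dist x x0 := by
    by_contra hcon
    push Not at hcon
    apply hXub
    rw [Metric.isBounded_iff_subset_closedBall x0]
    exact ⟨r, fun x _ => Metric.mem_closedBall.2 (hcon x).le⟩
  obtain ⟨u, n, hn, hu, h1, h2⟩ := hX x0 x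
  have hex : ∃ i, 1 ≤ i ∧ r ≤ dist (u i) x0 := ⟨n, hn, by rw [h2]; exact hx⟩
  have hle : Nat.find hex ≤ n := Nat.find_le ⟨hn, by rw [h2]; exact hx⟩
  obtain ⟨a1, a2⟩ := Nat.find_spec hex
  rcases Nat.lt_or_ge 1 (Nat.find hex) with hlt | hge
  · obtain ⟨j, hj⟩ := Nat.exists_eq_add_of_lt hlt
    have hmin := Nat.find_min hex (m := 1 + j) (by omega)
    push Not at hmin
    have h3 := hmin (by omega)
    have h4 := hu.step (i := 1 + j) (by constructor <;> omega) (by constructor <;> omega)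
    rw [← hj] at h4
    have := dist_triangle_left (u (Nat.find hex)) x0 (u (1 + j))
    exact ⟨_, a2, by linarith⟩
  · have : Nat.find hex = 1 := by omega
    rw [this, h1] at a2
    exact ⟨x0, a2, by simp; linarith⟩

/-- the two-leg path -/
theorem two_leg {X Y : Type*} [MetricSpace X] [MetricSpace Y] {q Q : ℝ} (hq : 1 ≤ q) (hQ : 0 ≤ Q)
    (hX : IntegrallyQGWith X q Q) (hY : IntegrallyQGWith Y q Q) (a x : X) (b y : Y) :
    ∃ (α : ℕ → X) (β : ℕ → Y) (L : ℕ), α 0 = a ∧ β 0 = b ∧ α L = x ∧ β L = y ∧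
      (∀ t, t ≤ L → α t = a ∨ β t = y) ∧
      (∀ t, t < L → dist (α t) (α (t+1)) + dist (β t) (β (t+1)) ≤ q + Q) ∧
      (∀ i j, i ≤ j → j ≤ L →
        ((j : ℝ) - i) ≤ q * (dist (α i) (α j) + dist (β i) (β j) + 2 * Q)) := by
  obtain ⟨u, n, hn, hu, hu1, hun⟩ := hY b y
  obtain ⟨v, n', hn', hv, hv1, hvn⟩ := hX a x
  obtain ⟨n, rfl⟩ := Nat.exists_eq_add_of_le' hn
  obtain ⟨n', rfl⟩ := Nat.exists_eq_add_of_le' hn'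
  let α : ℕ → X := fun t => v (t - n + 1)
  let β : ℕ → Y := fun t => u (min t n + 1)
  have α1 : ∀ t, t ≤ n → α t = a := by
    intro t ht
    have : t - n = 0 := by omega
    simp [α, this, hv1]
  have α2 : ∀ t, α (n + t) = v (t + 1) := by
    intro t; simp [α]
  have β1 : ∀ t, t ≤ n → β t = u (t + 1) := by
    intro t ht; simp [β, ht]
  have β2 : ∀ t, β (n + t) = y := by
    intro t; simp [β, hun]
  have hqQ : 0 ≤ q * Q := mul_nonneg (by linarith) hQ
  have Hu : ∀ i j, i ≤ n → j ≤ n → (j:ℝ) - i ≤ q * (dist (u (i+1)) (u (j+1)) + Q) := by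
    intro i j hi hj
    have := hu.lower hq (i := i+1) (j := j+1) (by constructor <;> omega) (by constructor <;> omega)
    push_cast at this
    linarith
  have Hv : ∀ i j, i ≤ n' → j ≤ n' → (j:ℝ) - i ≤ q * (dist (v (i+1)) (v (j+1)) + Q) := by
    intro i j hi hj
    have := hv.lower hq (i := i+1) (j := j+1) (by constructor <;> omega) (by constructor <;> omega)
    push_cast at this
    linarith
  refine ⟨α, β, n + n', α1 0 (by omega), by rw [β1 0 (by omega), hu1], by rw [α2, hvn],
    β2 _, ?_, ?_, ?_⟩
  · intro t ht
    rcases le_total t n with h | h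
    · exact Or.inl (α1 t h)
    · obtain ⟨e, rfl⟩ := Nat.exists_eq_add_of_le h
      exact Or.inr (β2 e)
  · intro t ht
    rcases Nat.lt_or_ge t n with h | h
    · rw [α1 t h.le, α1 (t+1) h, β1 t h.le, β1 (t+1) h, dist_self, zero_add]
      exact hu.step (by constructor <;> omega) (by constructor <;> omega)
    · obtain ⟨e, rfl⟩ := Nat.exists_eq_add_of_le h
      rw [add_assoc, α2, α2, β2, β2, dist_self, add_zero]
      exact hv.step (by constructor <;> omega) (by constructor <;> omega)
  · intro i j hij hj
    rcases le_total j n with h | h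
    · rw [α1 i (by omega), α1 j h, β1 i (by omega), β1 j h, dist_self]
      have := Hu i j (by omega) h
      linarith
    · obtain ⟨f, rfl⟩ := Nat.exists_eq_add_of_le h
      rcases le_total i n with h' | h'
      · rw [α1 i h', α2, β1 i h', β2]
        have h1 := Hu i n h' le_rfl
        have h2 := Hv 0 f (by omega) (by omega)
        rw [hun] at h1
        rw [zero_add, hv1] at h2
        push_cast at h2 ⊢
        linarith
      · obtain ⟨e, rfl⟩ := Nat.exists_eq_add_of_le h'
        rw [α2, α2, β2, β2, dist_self]
        have h2 := Hv e f (by omega) (by omega)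
        push_cast
        linarith

theorem dist_L1 {X Y : Type*} [MetricSpace X] [MetricSpace Y] (p z : WithLp 1 (X × Y)) :
    dist p z = dist p.fst z.fst + dist p.snd z.snd := by
  rw [WithLp.prod_dist_eq_add (by simp)]
  simp

theorem qg_of_chain {Z : Type*} [MetricSpace Z] (k D E : ℝ) (hk : 1 ≤ k) (hD : D ≤ k) (hE : E ≤ k)
    (w : ℕ → Z) (T : ℕ)
    (h1 : ∀ i, 1 ≤ i → i < T → dist (w i) (w (i+1)) ≤ D)
    (h2 : ∀ i j, 1 ≤ i → i ≤ j → j ≤ T → (j : ℝ) - i ≤ E * dist (w i) (w j) + E) :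
    IsQGOn k k w (Set.Icc 1 T) := by
  have key : ∀ i j, 1 ≤ i → i ≤ j → j ≤ T →
      |(i : ℝ) - j| / k - k ≤ dist (w i) (w j) ∧ dist (w i) (w j) ≤ k * |(i : ℝ) - j| + k := by
    intro i j hi hij hj
    have hij' : (i : ℝ) ≤ j := by exact_mod_cast hij
    rw [abs_sub_comm, abs_of_nonneg (by linarith)]
    constructor
    · rw [sub_le_iff_le_add, div_le_iff₀ (by linarith)]
      have := h2 i j hi hij hj
      have hd : 0 ≤ dist (w i) (w j) := dist_nonneg
      nlinarith
    · have : dist (w i) (w j) ≤ k * ((j : ℝ) - i) := by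
        clear hij'
        induction j, hij using Nat.le_induction with
        | base => simp
        | succ j hij ih =>
          have a := ih (by omega)
          have b := h1 j (by omega) (by omega)
          have c := dist_triangle (w i) (w j) (w (j+1))
          push_cast
          linarith
      linarith
  intro i hi j hj
  rcases le_total i j with h | h
  · exact key i j hi.1 h hj.2
  · have := key j i hj.1 h hi.2
    rwa [abs_sub_comm, dist_comm] at this

set_option maxHeartbeats 1000000 in
theorem reach {X Y : Type*} [MetricSpace X] [MetricSpace Y] {q Q : ℝ} (hq : 1 ≤ q) (hQ : 0 ≤ Q)
    (hX : IntegrallyQGWith X q Q) (hY : IntegrallyQGWith Y q Q)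
    (o : WithLp 1 (X × Y)) (A : ℕ) (hA : 1 ≤ A) (S : ℝ) (hS : 0 ≤ S) :
    ∃ k : ℝ, 1 ≤ k ∧ ∀ g : ℕ → WithLp 1 (X × Y), IsQGRay q Q g →
      (∀ i : ℕ, 1 ≤ i → (i : ℝ) ≤ A * dist (g i) o + A) →
      (∀ i : ℕ, 1 ≤ i → dist (g i) o ≤ A * i + A) →
      ∀ k', k ≤ k' → ∀ m : ℕ, ∀ z : WithLp 1 (X × Y),
        4 * ((A : ℝ) * (m + 1)) ≤ dist z.fst o.fst →
        dist z.fst o.fst ≤ 4 * ((A : ℝ) * (m + 1)) + S →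
        4 * ((A : ℝ) * (m + 1)) ≤ dist z.snd o.snd →
        dist z.snd o.snd ≤ 4 * ((A : ℝ) * (m + 1)) + S →
        z ∈ Cone (g 1) k' k' g m := by
  have : Nonempty (WithLp 1 (X × Y)) := ⟨o⟩
  have hqQ : 0 ≤ q * Q := mul_nonneg (by linarith) hQ
  set D : ℝ := q + Q with hDdef
  have hD1 : 1 ≤ D := by linarith
  set B : ℝ := q * (1 + 2 * Q) with hBdef
  have hB1 : 1 ≤ B := by nlinarith
  -- two-leg paths in the product
  have legs : ∀ p z : WithLp 1 (X × Y), (∃ (σ : ℕ → WithLp 1 (X × Y)) (L : ℕ), σ 0 = p ∧ σ L = z ∧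
      (∀ t, t ≤ L → (σ t).fst = p.fst ∨ (σ t).snd = z.snd) ∧
      (∀ i, i < L → dist (σ i) (σ (i+1)) ≤ D) ∧
      (∀ i j, i ≤ j → j ≤ L → ((j : ℝ) - i) ≤ q * (dist (σ i) (σ j) + 2 * Q))) ∧
      (∃ (σ : ℕ → WithLp 1 (X × Y)) (L : ℕ), σ 0 = p ∧ σ L = z ∧
      (∀ t, t ≤ L → (σ t).snd = p.snd ∨ (σ t).fst = z.fst) ∧
      (∀ i, i < L → dist (σ i) (σ (i+1)) ≤ D) ∧
      (∀ i j, i ≤ j → j ≤ L → ((j : ℝ) - i) ≤ q * (dist (σ i) (σ j) + 2 * Q))) := by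
    intro p z
    constructor
    · obtain ⟨α, β, L, a0, b0, aL, bL, h1, h2, h3⟩ := two_leg hq hQ hX hY p.fst z.fst p.snd z.snd
      refine ⟨fun t => WithLp.toLp 1 (α t, β t), L, ?_, ?_, h1, ?_, ?_⟩
      · simp only [a0, b0]; rfl
      · simp only [aL, bL]; rfl
      · intro i hi; rw [dist_L1]; exact h2 i hi
      · intro i j hij hj; rw [dist_L1]; exact h3 i j hij hj
    · obtain ⟨β, α, L, b0, a0, bL, aL, h1, h2, h3⟩ := two_leg hq hQ hY hX p.snd z.snd p.fst z.fst
      refine ⟨fun t => WithLp.toLp 1 (α t, β t), L, ?_, ?_, h1, ?_, ?_⟩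
      · simp only [a0, b0]; rfl
      · simp only [aL, bL]; rfl
      · intro i hi; rw [dist_L1, add_comm]; exact h2 i hi
      · intro i j hij hj; rw [dist_L1, add_comm (dist _ _) (dist _ _)]; exact h3 i j hij hj
  obtain ⟨N, symm, tri, self, geo, N1, ND, NB⟩ := graphN (Z := WithLp 1 (X × Y)) D B (by
    intro p z
    obtain ⟨σ, L, h0, hL, -, h1, h2⟩ := (legs p z).1
    refine ⟨σ, L, h0, hL, h1, ?_⟩
    have := h2 0 L (by omega) le_rfl
    rw [h0, hL] at this
    have hd : 0 ≤ dist p z := dist_nonneg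
    push_cast at this
    have : 0 ≤ q * Q * dist p z := mul_nonneg hqQ hd
    rw [hBdef]
    nlinarith)
  set M : ℝ := 9 * A + q * (9 * A ^ 2 + 9 + 2 * S + 2 * Q) with hMdef
  have hA1 : (1 : ℝ) ≤ A := by exact_mod_cast hA
  have hM : 9 * q ≤ M := by
    have : 0 ≤ q * (9 * (A:ℝ) ^ 2 + 2 * S + 2 * Q) := by positivity
    rw [hMdef]; nlinarith
  obtain ⟨K, hKM⟩ := exists_nat_ge (M * D)
  obtain ⟨C, hC⟩ := exists_nat_ge (2 * (q * Q))
  have hqK : q * D ≤ K := by nlinarith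
  have hK1 : (1 : ℝ) ≤ K := by nlinarith
  have hKB : (K : ℝ) ≤ K * B := by nlinarith
  refine ⟨D + K * B + C, by linarith [Nat.cast_nonneg (α := ℝ) C], ?_⟩
  intro g hg hlow hup k' hk' m z hz1 hz2 hz3 hz4
  set ρ : ℝ := (A : ℝ) * (m + 1) with hρ
  have hm0 : (0 : ℝ) ≤ m := Nat.cast_nonneg m
  have hρA : (A : ℝ) ≤ ρ := by rw [hρ]; nlinarith
  have hρ1 : 1 ≤ ρ := by linarith
  obtain ⟨J, hJ⟩ : ∃ J : ℕ, J = A * (8 * (A * (m + 1)) + 1) := ⟨_, rfl⟩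
  have hJ1 : 1 ≤ J := by rw [hJ]; exact Nat.mul_pos hA (by omega)
  have hJr : (J : ℝ) = A * (8 * ρ + 1) := by rw [hJ, hρ]; push_cast; ring
  have hJle : (J : ℝ) ≤ 9 * A * ρ := by rw [hJr]; nlinarith
  have hgJ : 8 * ρ ≤ dist (g J) o := by
    have := hlow J hJ1
    rw [hJr] at this
    have h2 : (A : ℝ) * (8 * ρ) ≤ A * dist (g J) o := by linarith
    exact le_of_mul_le_mul_left h2 (by linarith)
  obtain ⟨σ, L, h0, hL, hav, hst, hlo⟩ : ∃ (σ : ℕ → WithLp 1 (X × Y)) (L : ℕ), σ 0 = g J ∧ σ L = z ∧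
      (∀ t, t ≤ L → 4 * ρ ≤ dist (σ t) o) ∧
      (∀ i, i < L → dist (σ i) (σ (i+1)) ≤ D) ∧
      (∀ i j, i ≤ j → j ≤ L → ((j : ℝ) - i) ≤ q * (dist (σ i) (σ j) + 2 * Q)) := by
    have hsum := dist_L1 (g J) o
    rcases le_total (4 * ρ) (dist (g J).fst o.fst) with hc | hc
    · obtain ⟨σ, L, h0, hL, h1, h2, h3⟩ := (legs (g J) z).1
      refine ⟨σ, L, h0, hL, ?_, h2, h3⟩
      intro t ht
      rw [dist_L1]
      have e1 : 0 ≤ dist (σ t).fst o.fst := dist_nonneg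
      have e2 : 0 ≤ dist (σ t).snd o.snd := dist_nonneg
      rcases h1 t ht with h | h
      · rw [h] at e1 ⊢; linarith
      · rw [h] at e2 ⊢; linarith
    · obtain ⟨σ, L, h0, hL, h1, h2, h3⟩ := (legs (g J) z).2
      refine ⟨σ, L, h0, hL, ?_, h2, h3⟩
      intro t ht
      rw [dist_L1]
      have e1 : 0 ≤ dist (σ t).fst o.fst := dist_nonneg
      have e2 : 0 ≤ dist (σ t).snd o.snd := dist_nonneg
      rcases h1 t ht with h | h
      · rw [h] at e2 ⊢; linarith
      · rw [h] at e1 ⊢; linarith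
  have hLle : (L : ℝ) ≤ q * (9 * A ^ 2 + 9 + 2 * S + 2 * Q) * ρ := by
    have a1 := hlo 0 L (by omega) le_rfl
    rw [h0, hL] at a1
    have a2 := dist_triangle_right (g J) z o
    have a3 := hup J hJ1
    have a4 : dist z o ≤ 8 * ρ + 2 * S := by rw [dist_L1]; linarith
    have a5 : (A : ℝ) * J ≤ 9 * A ^ 2 * ρ := by
      have := mul_le_mul_of_nonneg_left hJle (by linarith : (0 : ℝ) ≤ A)
      linarith
    have a6 : S ≤ S * ρ := le_mul_of_one_le_right hS hρ1
    have a7 : Q ≤ Q * ρ := le_mul_of_one_le_right hQ hρ1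
    have a8 : dist (g J) z + 2 * Q ≤ (9 * A ^ 2 + 9 + 2 * S + 2 * Q) * ρ := by linarith
    have a9 := mul_le_mul_of_nonneg_left a8 (by linarith : 0 ≤ q)
    push_cast at a1
    linarith
  have hJL : (J : ℝ) + L ≤ M * ρ := by rw [hMdef]; linarith
  have hlift : ∀ (p r : WithLp 1 (X × Y)) (i j : ℕ), (j : ℝ) - i ≤ q * (dist p r + 2 * Q) →
      j - i ≤ K * N p r + C := by
    intro p r i j h
    have a1 := ND p r
    have a2 : q * dist p r ≤ q * (D * N p r) := mul_le_mul_of_nonneg_left a1 (by linarith)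
    have a3 : q * D * N p r ≤ K * N p r := mul_le_mul_of_nonneg_right hqK (Nat.cast_nonneg _)
    have a4 : (j : ℝ) ≤ i + (K * N p r + C) := by linarith
    have a5 : j ≤ i + (K * N p r + C) := by exact_mod_cast a4
    omega
  obtain ⟨w, T, hmT, hT1, hw1, hwm, hwT, hwst, hwlo⟩ := surgery N symm tri self geo K C J L m
    (by exact_mod_cast hK1) hJ1 g σ
    (fun i hi => N1 _ _ (hg.step hi (by simp)))
    (fun i j hi hij hj => hlift _ _ _ _ (by
      have := IsQGOn.lower hg hq (i := i) (j := j) hi (le_trans hi hij)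
      linarith))
    (fun i hi => N1 _ _ (hst i hi))
    (fun i j hij hj => hlift _ _ _ _ (hlo i j hij hj))
    h0
    (by
      intro s t hs hsm ht
      have a1 := hup s hs
      have hsm' : (s : ℝ) ≤ m := by exact_mod_cast hsm
      have a2 : dist (g s) o ≤ ρ := by rw [hρ]; nlinarith
      have a3 := hav t ht
      have a4 := dist_triangle_left (σ t) o (g s)
      have a5 := ND (g s) (σ t)
      have a6 : 3 * ρ ≤ D * N (g s) (σ t) := by linarith
      have a7 : M * (3 * ρ) ≤ M * (D * N (g s) (σ t)) :=
        mul_le_mul_of_nonneg_left a6 (by linarith)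
      have a8 : M * D * N (g s) (σ t) ≤ K * N (g s) (σ t) :=
        mul_le_mul_of_nonneg_right hKM (Nat.cast_nonneg _)
      have a9 : 0 < M * ρ := mul_pos (by linarith) (by linarith)
      have : (J : ℝ) + L < K * N (g s) (σ t) := by linarith
      exact_mod_cast this)
  refine ⟨w, T, T, ?_, hw1, hwm, hmT, le_rfl, hwT.trans hL⟩
  have hC0 : (0 : ℝ) ≤ C := Nat.cast_nonneg C
  refine qg_of_chain k' D (K * B + C) (by linarith) (by linarith) (by linarith) w T ?_ ?_
  · intro i hi hiT
    have a1 := ND (w i) (w (i+1))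
    have a2 : (N (w i) (w (i+1)) : ℝ) ≤ 1 := by exact_mod_cast hwst i hi hiT
    nlinarith
  · intro i j hi hij hj
    have a1 := hwlo i j hi hij hj
    have a2 : j ≤ i + (K * N (w i) (w j) + C) := by omega
    have a3 : (j : ℝ) ≤ i + (K * N (w i) (w j) + C) := by exact_mod_cast a2
    have a4 := NB (w i) (w j)
    have a5 : (K : ℝ) * N (w i) (w j) ≤ K * (B * dist (w i) (w j) + B) :=
      mul_le_mul_of_nonneg_left a4 (by linarith)
    have a6 : 0 ≤ C * dist (w i) (w j) := mul_nonneg hC0 dist_nonneg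
    linarith

theorem ray_bounds {Z : Type*} [MetricSpace Z] {q Q : ℝ} (hq : 1 ≤ q) (hQ : 0 ≤ Q)
    {g : ℕ → Z} (hg : IsQGRay q Q g) (o : Z) :
    ∃ A0 : ℝ, ∀ A : ℝ, A0 ≤ A → (∀ i : ℕ, 1 ≤ i → (i : ℝ) ≤ A * dist (g i) o + A) ∧
      (∀ i : ℕ, 1 ≤ i → dist (g i) o ≤ A * i + A) := by
  have he : 0 ≤ dist (g 1) o := dist_nonneg
  have hqe : 0 ≤ q * (dist (g 1) o + Q) := mul_nonneg (by linarith) (by linarith)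
  refine ⟨q + Q + dist (g 1) o + q * (dist (g 1) o + Q) + 1, fun A hA => ⟨?_, ?_⟩⟩
  · intro i hi
    have h1 := IsQGOn.lower hg hq (i := 1) (j := i) (le_refl 1) hi
    have h2 := dist_triangle_right (g 1) (g i) o
    have h3 : 0 ≤ dist (g i) o := dist_nonneg
    have h4 : q * dist (g i) o ≤ A * dist (g i) o :=
      mul_le_mul_of_nonneg_right (by linarith) h3
    have h5 := mul_le_mul_of_nonneg_left h2 (by linarith : 0 ≤ q)
    push_cast at h1
    nlinarith
  · intro i hi
    have h1 := (hg i hi 1 (le_refl 1)).2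
    have hi' : (1 : ℝ) ≤ i := by exact_mod_cast hi
    rw [abs_of_nonneg (by push_cast; linarith)] at h1
    have h2 := dist_triangle (g i) (g 1) o
    have h4 : q * i ≤ A * i := mul_le_mul_of_nonneg_right (by linarith) (by linarith)
    push_cast at h1
    nlinarith

theorem cone_close {Z : Type*} [MetricSpace Z] {f : Z → ℂ} (hf : GeomSO f) {g : ℕ → Z}
    {k : ℝ} (hk : 1 ≤ k) (hg : IsQGRay k k g) {Lg : ℂ}
    (hLg : Tendsto (fun i => f (g i)) atTop (nhds Lg)) (ε : ℝ) (hε : 0 < ε) :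
    ∃ m0 : ℕ, ∀ m, m0 ≤ m → ∀ z ∈ Cone (g 1) k k g m, dist (f z) Lg ≤ ε := by
  obtain ⟨hb, -, -, hcone⟩ := hf
  obtain ⟨m0, hm0, hd⟩ := hcone ε hε k hk (g 1) g hg rfl
  refine ⟨m0, ?_⟩
  rintro m hm z ⟨h, n, i, h1, h2, h3, h4, h5, h6⟩
  have hz : z ∈ Cone (g 1) k k g m0 :=
    ⟨h, n, i, h1, h2, fun j hj hj' => h3 j hj (hj'.trans hm), hm.trans h4, h5, h6⟩
  have hlim : Tendsto (fun i => dist (f z) (f (g i))) atTop (nhds (dist (f z) Lg)) :=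
    tendsto_const_nhds.dist hLg
  refine le_of_tendsto hlim ?_
  filter_upwards [eventually_ge_atTop m0] with i hi
  have hgi : g i ∈ Cone (g 1) k k g m0 :=
    ⟨g, i, i, fun x hx y hy => hg x hx.1 y hy.1, rfl, fun _ _ _ => rfl, hi, le_rfl, rfl⟩
  refine le_trans (Metric.dist_le_diam_of_mem (hb.subset (Set.image_subset_range _ _))
    (Set.mem_image_of_mem f hz) (Set.mem_image_of_mem f hgi)) hd.le

/-- Proposition 5.1: the ℓ₁-product of proper unbounded integrally quasi-geodesic spaces
has trivial quasi-geodesic boundary. -/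
theorem stmt_14 {X Y : Type*} [MetricSpace X] [MetricSpace Y]
    [ProperSpace X] [ProperSpace Y]
    (hXub : ¬ Bornology.IsBounded (Set.univ : Set X))
    (hYub : ¬ Bornology.IsBounded (Set.univ : Set Y))
    (hX : ∃ q Q : ℝ, 1 ≤ q ∧ 0 ≤ Q ∧ IntegrallyQGWith X q Q)
    (hY : ∃ q Q : ℝ, 1 ≤ q ∧ 0 ≤ Q ∧ IntegrallyQGWith Y q Q)
    (g h : ℕ → WithLp 1 (X × Y))
    (hg : ∃ q Q : ℝ, 1 ≤ q ∧ 0 ≤ Q ∧ IsQGRay q Q g)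
    (hh : ∃ q Q : ℝ, 1 ≤ q ∧ 0 ≤ Q ∧ IsQGRay q Q h)
    (f : WithLp 1 (X × Y) → ℂ) (hf : GeomSO f) (Lg Lh : ℂ)
    (hLg : Tendsto (fun i => f (g i)) atTop (nhds Lg))
    (hLh : Tendsto (fun i => f (h i)) atTop (nhds Lh)) :
    Lg = Lh := by
  obtain ⟨q1, Q1, hq1, hQ1, hX⟩ := hX
  obtain ⟨q2, Q2, hq2, hQ2, hY⟩ := hY
  obtain ⟨q3, Q3, hq3, hQ3, hg⟩ := hg
  obtain ⟨q4, Q4, hq4, hQ4, hh⟩ := hh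
  obtain ⟨q, e1, e2, e3, e4⟩ : ∃ q, q1 ≤ q ∧ q2 ≤ q ∧ q3 ≤ q ∧ q4 ≤ q :=
    ⟨q1 + q2 + q3 + q4, by linarith, by linarith, by linarith, by linarith⟩
  obtain ⟨Q, d1, d2, d3, d4⟩ : ∃ Q, Q1 ≤ Q ∧ Q2 ≤ Q ∧ Q3 ≤ Q ∧ Q4 ≤ Q :=
    ⟨Q1 + Q2 + Q3 + Q4, by linarith, by linarith, by linarith, by linarith⟩
  have hq : 1 ≤ q := by linarith
  have hQ : 0 ≤ Q := by linarith
  replace hX : IntegrallyQGWith X q Q := by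
    intro x y
    obtain ⟨u, n, h1, h2, h3⟩ := hX x y
    exact ⟨u, n, h1, h2.mono' hq1 e1 d1, h3⟩
  replace hY : IntegrallyQGWith Y q Q := by
    intro x y
    obtain ⟨u, n, h1, h2, h3⟩ := hY x y
    exact ⟨u, n, h1, h2.mono' hq2 e2 d2, h3⟩
  replace hg : IsQGRay q Q g := IsQGOn.mono' hg hq3 e3 d3
  replace hh : IsQGRay q Q h := IsQGOn.mono' hh hq4 e4 d4
  set o := g 1
  obtain ⟨Ag, hAg⟩ := ray_bounds hq hQ hg o
  obtain ⟨Ah, hAh⟩ := ray_bounds hq hQ hh o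
  obtain ⟨A, hA⟩ := exists_nat_ge (max 1 (max Ag Ah))
  have hA1 : 1 ≤ A := by exact_mod_cast (le_max_left _ _).trans hA
  have hA2 : Ag ≤ A := ((le_max_left _ _).trans (le_max_right _ _)).trans hA
  have hA3 : Ah ≤ A := ((le_max_right _ _).trans (le_max_right _ _)).trans hA
  obtain ⟨k0, hk0, hreach⟩ := reach hq hQ hX hY o A hA1 (q + Q) (by linarith)
  have hk : 1 ≤ k0 + q + Q := by linarith
  refine eq_of_forall_dist_le fun ε hε => ?_
  obtain ⟨mg, hmg⟩ := cone_close hf hk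
    (IsQGOn.mono' hg hq (by linarith) (by linarith)) hLg (ε / 2) (by linarith)
  obtain ⟨mh, hmh⟩ := cone_close hf hk
    (IsQGOn.mono' hh hq (by linarith) (by linarith)) hLh (ε / 2) (by linarith)
  have hr : 0 ≤ 4 * ((A : ℝ) * (((max mg mh : ℕ) : ℝ) + 1)) := by positivity
  obtain ⟨x, hx1, hx2⟩ := exists_at_dist hXub hq hQ hX o.fst _ hr
  obtain ⟨y, hy1, hy2⟩ := exists_at_dist hYub hq hQ hY o.snd _ hr
  have c1 := hmg _ (le_max_left mg mh) _ (hreach g hg (hAg A hA2).1 (hAg A hA2).2 (k0 + q + Q)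
    (by linarith) (max mg mh) (WithLp.toLp 1 (x, y)) hx1 hx2 hy1 hy2)
  have c2 := hmh _ (le_max_right mg mh) _ (hreach h hh (hAh A hA3).1 (hAh A hA3).2 (k0 + q + Q)
    (by linarith) (max mg mh) (WithLp.toLp 1 (x, y)) hx1 hx2 hy1 hy2)
  have := dist_triangle_left Lg Lh (f (WithLp.toLp 1 (x, y)))
  linarith
end

section
/- Let X be a proper geodesic δ-hyperbolic metric space, let p ∈ X, and let f : X → ℝ be a bounded continuous geometrically slowly-oscillating function. If (xᵢ) is a sequence in X converging to a point of the Gromov boundary, i.e., lim_{i→∞, j→∞} ⟨xᵢ, xⱼ⟩_p = ∞, then the sequence (f(xᵢ)) converges. -/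
open Filter Metric

theorem qg_of_rough {X : Type*} [MetricSpace X] {k : ℝ} (hk : 1 ≤ k) {g : ℕ → X} {s : Set ℕ}
    (h : ∀ a ∈ s, ∀ b ∈ s, a ≤ b → |dist (g a) (g b) - ((b : ℝ) - a)| ≤ k) :
    IsQGOn k k g s := by
  have key : ∀ t d : ℝ, 0 ≤ t → |d - t| ≤ k → t / k - k ≤ d ∧ d ≤ k * t + k := by
    intro t d ht hd
    have h1 : t / k ≤ t := div_le_self ht hk
    have h2 : t ≤ k * t := by nlinarith
    rw [abs_le] at hd
    constructor <;> linarith [hd.1, hd.2]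
  intro a ha b hb
  rcases le_total a b with hab | hab
  · have hab' : (a : ℝ) ≤ b := by exact_mod_cast hab
    rw [abs_sub_comm, abs_of_nonneg (sub_nonneg.2 hab')]
    exact key _ _ (sub_nonneg.2 hab') (h a ha b hb hab)
  · have hab' : (b : ℝ) ≤ a := by exact_mod_cast hab
    rw [abs_of_nonneg (sub_nonneg.2 hab'), dist_comm]
    exact key _ _ (sub_nonneg.2 hab') (h b hb a ha hab)

theorem gp_le {X : Type*} [MetricSpace X] (p u v : X) :
    gromovProd p u v ≤ dist p u ∧ gromovProd p u v ≤ dist p v := by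
  unfold gromovProd
  have h1 := dist_triangle u v p
  have h2 := dist_triangle v u p
  rw [dist_comm v u] at h2
  rw [dist_comm p u, dist_comm p v]
  constructor <;> linarith

theorem fellow {X : Type*} [MetricSpace X] (δ : ℝ)
    (hhyp : ∀ x y z a : X,
      gromovProd a x y ≥ min (gromovProd a x z) (gromovProd a z y) - δ / 4)
    (p u v a b : X) (t : ℝ) (ht : t ≤ gromovProd p u v)
    (ha : dist p a = t) (hau : dist a u = dist p u - t)
    (hb : dist p b = t) (hbv : dist b v = dist p v - t) : dist a b ≤ δ := by
  have hδ : 0 ≤ δ := by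
    have := hhyp p p p p
    simp [gromovProd] at this
    linarith
  have h1 : gromovProd p a u = t := by
    unfold gromovProd
    rw [dist_comm a p, dist_comm u p]; linarith
  have h2 : gromovProd p v b = t := by
    unfold gromovProd
    rw [dist_comm b p, dist_comm v p, dist_comm v b]; linarith
  have h3 := hhyp u b v p
  have h4 := hhyp a b u p
  rw [h2, min_eq_right ht] at h3
  rw [h1] at h4
  have h5 : t - δ / 4 ≤ min t (gromovProd p u b) := le_min (by linarith) h3
  have h6 : gromovProd p a b = (t + t - dist a b) / 2 := by
    unfold gromovProd
    rw [dist_comm a p, dist_comm b p, ha, hb]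
  linarith

/-- Proposition 4.14 (one direction): on a proper geodesic δ-hyperbolic space, a bounded
continuous geometrically slowly-oscillating function converges along every sequence
converging to a point of the Gromov boundary. -/
theorem stmt_15 {X : Type*} [MetricSpace X] [ProperSpace X]
    (hgeo : IsGeodesicSpace X) (δ : ℝ)
    (hhyp : ∀ x y z a : X,
      gromovProd a x y ≥ min (gromovProd a x z) (gromovProd a z y) - δ / 4)
    (p : X) (f : X → ℝ) (hf : GeomSO f)
    (x : ℕ → X)
    (hx : Tendsto (fun ij : ℕ × ℕ => gromovProd p (x ij.1) (x ij.2)) atTop atTop) :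
    ∃ L : ℝ, Tendsto (fun i => f (x i)) atTop (nhds L) := by
  obtain ⟨hbd, -, -, hcone⟩ := hf
  have hδ : 0 ≤ δ := by
    have := hhyp p p p p
    simp [gromovProd] at this
    linarith
  choose γ hγ0 hγ1 hγ using fun i => hgeo p (x i)
  have hN : ∀ n : ℕ, ∃ N : ℕ, ∀ i j, N ≤ i → N ≤ j → (n : ℝ) ≤ gromovProd p (x i) (x j) := by
    intro n
    obtain ⟨⟨a, b⟩, hab⟩ := eventually_atTop.1 (hx.eventually_ge_atTop (n : ℝ))
    refine ⟨max a b, fun i j hi hj => hab (i, j) ?_⟩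
    exact ⟨le_trans (le_max_left _ _) hi, le_trans (le_max_right _ _) hj⟩
  choose N hN using hN
  obtain ⟨I, hImono, hI⟩ : ∃ I : ℕ → ℕ, Monotone I ∧
      ∀ n i j, I n ≤ i → I n ≤ j → (n : ℝ) ≤ gromovProd p (x i) (x j) := by
    refine ⟨fun n => (Finset.range (n + 1)).sup N, ?_, ?_⟩
    · intro a b hab
      exact Finset.sup_mono (Finset.range_mono (by omega))
    · intro n i j hi hj
      have : N n ≤ (Finset.range (n + 1)).sup N := Finset.le_sup (by simp)
      exact hN n i j (this.trans hi) (this.trans hj)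
  -- basic comparison
  have hd : ∀ n i, I n ≤ i → (n : ℝ) ≤ dist p (x i) := fun n i hi =>
    (hI n i i hi hi).trans (gp_le _ _ _).1
  have hfel : ∀ n i j, I n ≤ i → I n ≤ j → dist (γ i n) (γ j n) ≤ δ := by
    intro n i j hi hj
    have aux : ∀ i, I n ≤ i → dist p (γ i n) = n ∧ dist (γ i n) (x i) = dist p (x i) - n := by
      intro i hi
      have hdi := hd n i hi
      have h0 : (0 : ℝ) ≤ n := Nat.cast_nonneg n
      have e1 := hγ i 0 ⟨le_refl _, dist_nonneg⟩ n ⟨h0, hdi⟩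
      have e2 := hγ i n ⟨h0, hdi⟩ _ ⟨dist_nonneg, le_refl _⟩
      rw [hγ0, zero_sub, abs_neg, abs_of_nonneg h0] at e1
      rw [hγ1, abs_sub_comm, abs_of_nonneg (sub_nonneg.2 hdi)] at e2
      exact ⟨e1, e2⟩
    exact fellow δ hhyp p (x i) (x j) _ _ n (hI n i j hi hj) (aux i hi).1 (aux i hi).2
      (aux j hj).1 (aux j hj).2
  -- distance from the ray to a point on a far geodesic
  have hray : ∀ n i, I n ≤ i → ∀ s : ℝ, n ≤ s → s ≤ dist p (x i) →
      |dist (γ (I n) n) (γ i s) - (s - n)| ≤ δ := by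
    intro n i hi s hns hs
    have h0 : (0 : ℝ) ≤ n := Nat.cast_nonneg n
    have e1 := hγ i n ⟨h0, hd n i hi⟩ s ⟨h0.trans hns, hs⟩
    rw [abs_sub_comm, abs_of_nonneg (sub_nonneg.2 hns)] at e1
    have e2 := hfel n (I n) i le_rfl hi
    have t1 := dist_triangle (γ (I n) n) (γ i n) (γ i s)
    have t2 := dist_triangle (γ i n) (γ (I n) n) (γ i s)
    rw [dist_comm (γ i n) (γ (I n) n)] at t2
    rw [abs_le]
    constructor <;> linarith
  set g : ℕ → X := fun j => γ (I (j - 1)) ((j - 1 : ℕ) : ℝ) with hg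
  have hgg : ∀ a b : ℕ, 1 ≤ a → a ≤ b → |dist (g a) (g b) - ((b : ℝ) - a)| ≤ δ := by
    intro a b ha hab
    have h := hray (a - 1) (I (b - 1)) (hImono (by omega)) ((b - 1 : ℕ) : ℝ)
      (by exact_mod_cast (by omega : a - 1 ≤ b - 1)) (hd _ _ le_rfl)
    have e : (((b - 1 : ℕ) : ℝ) - ((a - 1 : ℕ) : ℝ)) = (b : ℝ) - a := by
      rw [Nat.cast_sub ha, Nat.cast_sub (ha.trans hab)]; ring
    rw [e] at h
    exact h
  have hk : (1 : ℝ) ≤ δ + 1 := by linarith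
  have hgray : IsQGRay (δ + 1) (δ + 1) g :=
    qg_of_rough hk fun a ha b _ hab => (hgg a b ha hab).trans (by linarith)
  have hmem : ∀ m i, 1 ≤ m → I m ≤ i → x i ∈ Cone (g 1) (δ + 1) (δ + 1) g m := by
    intro m i hm hi
    have hmd := hd m i hi
    have hfl : m ≤ ⌊dist p (x i)⌋₊ := Nat.le_floor hmd
    have hfl1 := Nat.floor_le (dist_nonneg : 0 ≤ dist p (x i))
    have hfl2 := Nat.lt_floor_add_one (dist p (x i))
    set F := ⌊dist p (x i)⌋₊ with hF
    refine ⟨fun j => if j ≤ m then g j else γ i (min ((j : ℝ) - 1) (dist p (x i))),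
      F + 2, F + 2, ?_, ?_, ?_, by omega, le_rfl, ?_⟩
    · apply qg_of_rough hk
      rintro a ⟨ha1, ha2⟩ b ⟨hb1, hb2⟩ hab
      have hbF : (b : ℝ) ≤ F + 2 := by exact_mod_cast hb2
      have haF : (a : ℝ) ≤ F + 2 := by exact_mod_cast ha2
      have ha1' : (1 : ℝ) ≤ a := by exact_mod_cast ha1
      have hab' : (a : ℝ) ≤ b := by exact_mod_cast hab
      have hbm : (b : ℝ) - 1 - 1 ≤ min ((b : ℝ) - 1) (dist p (x i)) :=
        le_min (by linarith) (by linarith)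
      have hbm' := min_le_left ((b : ℝ) - 1) (dist p (x i))
      have hbm'' := min_le_right ((b : ℝ) - 1) (dist p (x i))
      have ham : (a : ℝ) - 1 - 1 ≤ min ((a : ℝ) - 1) (dist p (x i)) :=
        le_min (by linarith) (by linarith)
      have ham' := min_le_left ((a : ℝ) - 1) (dist p (x i))
      have ham'' := min_le_right ((a : ℝ) - 1) (dist p (x i))
      by_cases hbm0 : b ≤ m
      · simp only [hbm0, hab.trans hbm0, if_true]
        exact (hgg a b ha1 hab).trans (by linarith)
      · by_cases ham0 : a ≤ m
        · simp only [hbm0, ham0, if_true, if_false]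
          have ham0' : (a : ℝ) ≤ m := by exact_mod_cast ham0
          have ec : ((a - 1 : ℕ) : ℝ) = (a : ℝ) - 1 := by rw [Nat.cast_sub ha1]; simp
          have h := hray (a - 1) i ((hImono (by omega)).trans hi)
            (min ((b : ℝ) - 1) (dist p (x i)))
            (by rw [ec]; exact le_min (by linarith) (by linarith)) hbm''
          change |dist (g a) _ - _| ≤ δ at h
          rw [ec] at h
          rw [abs_le] at h ⊢
          constructor <;> linarith [h.1, h.2]
        · simp only [hbm0, ham0, if_false]
          have hle : min ((a : ℝ) - 1) (dist p (x i)) ≤ min ((b : ℝ) - 1) (dist p (x i)) :=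
            min_le_min_right _ (by linarith)
          rw [hγ i _ ⟨le_min (by linarith) dist_nonneg, ham''⟩ _
            ⟨le_min (by linarith) dist_nonneg, hbm''⟩,
            abs_of_nonpos (sub_nonpos.2 hle), abs_le]
          constructor <;> linarith
    · simp [hm]
    · intro j _ hj
      simp [hj]
    · have : ¬ (F + 2 ≤ m) := by omega
      simp only [this, if_false]
      rw [min_eq_right (by push_cast; linarith), hγ1]
  apply cauchySeq_tendsto_of_complete
  rw [Metric.cauchySeq_iff]
  intro ε hε
  obtain ⟨m, hm, hdiam⟩ := hcone ε hε (δ + 1) hk (g 1) g hgray rfl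
  refine ⟨I m, fun i hi j hj => lt_of_le_of_lt (Metric.dist_le_diam_of_mem ?_ ?_ ?_) hdiam⟩
  · exact hbd.subset (Set.image_subset_range _ _)
  · exact ⟨_, hmem m i hm hi, rfl⟩
  · exact ⟨_, hmem m j hm hj, rfl⟩
end

section
/- Suppose X is a metric space with base point x₀ (write ‖x‖ = d(x,x₀)), g and h are integral quasi-geodesic rays in X, and κ : [0,∞) → [1,∞) is a sublinear, concave, and increasing function. Then the following two conditions are equivalent: (1) there is a constant C ≥ 1 such that d(g(t),h(t)) ≤ C·κ(‖g(t)‖) for all sufficiently large t; (2) there is a constant M > 0 such that d(g(t),h(t)) ≤ M·κ(t) for all sufficiently large t. -/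
open Filter Metric

/-- Scaling bound for concave monotone functions that are at least one. -/
theorem kappa_scale (κ : ℝ → ℝ) (hκ1 : ∀ t, 0 ≤ t → 1 ≤ κ t)
    (hκconc : ConcaveOn ℝ (Set.Ici 0) κ) (hκmono : MonotoneOn κ (Set.Ici 0))
    (a r s : ℝ) (ha : 1 ≤ a) (hr : 0 ≤ r) (hs : 0 ≤ s) (hsr : s ≤ a * r) :
    κ s ≤ a * κ r := by
  have ha0 : 0 < a := by linarith
  have har : 0 ≤ a * r := by positivity
  have h1 : κ s ≤ κ (a * r) := hκmono hs har hsr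
  have hinv : a⁻¹ ≤ 1 := inv_le_one_of_one_le₀ ha
  have hx : a * r ∈ Set.Ici (0 : ℝ) := har
  have hy : (0 : ℝ) ∈ Set.Ici (0 : ℝ) := le_refl (0 : ℝ)
  have hi0 : 0 ≤ a⁻¹ := by positivity
  have hi1 : 0 ≤ 1 - a⁻¹ := by linarith
  have h2 := hκconc.2 hx hy hi0 hi1 (by ring)
  simp only [smul_eq_mul, mul_zero, add_zero] at h2
  rw [inv_mul_cancel_left₀ ha0.ne'] at h2
  have h3 : 0 ≤ (1 - a⁻¹) * κ 0 :=
    mul_nonneg (by linarith) (by linarith [hκ1 0 le_rfl])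
  have h4 : a⁻¹ * κ (a * r) ≤ κ r := by linarith
  have h5 : κ (a * r) ≤ a * κ r := by
    rwa [inv_mul_le_iff₀ ha0] at h4
  linarith

/-- Lemma 6.6: for a sublinear concave increasing κ, tracking measured via κ(‖g(t)‖) and
via κ(t) are equivalent. -/
theorem stmt_16 {X : Type*} [MetricSpace X] (x₀ : X) (g h : ℕ → X)
    (hg : ∃ q Q : ℝ, 1 ≤ q ∧ 0 ≤ Q ∧ IsQGRay q Q g)
    (hh : ∃ q Q : ℝ, 1 ≤ q ∧ 0 ≤ Q ∧ IsQGRay q Q h)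
    (κ : ℝ → ℝ) (hκ1 : ∀ t, 0 ≤ t → 1 ≤ κ t)
    (hκsub : Tendsto (fun t => κ t / t) atTop (nhds 0))
    (hκconc : ConcaveOn ℝ (Set.Ici 0) κ)
    (hκmono : MonotoneOn κ (Set.Ici 0)) :
    (∃ C : ℝ, 1 ≤ C ∧ ∃ T : ℕ, ∀ t : ℕ, T ≤ t →
        dist (g t) (h t) ≤ C * κ (dist (g t) x₀)) ↔
    (∃ M : ℝ, 0 < M ∧ ∃ T : ℕ, ∀ t : ℕ, T ≤ t →
        dist (g t) (h t) ≤ M * κ (t : ℝ)) := by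
  obtain ⟨q, Q, hq, hQ, hray⟩ := hg
  have hq0 : 0 < q := by linarith
  have hD : 0 ≤ dist (g 1) x₀ := dist_nonneg
  have key : ∀ t : ℕ, 1 ≤ t → dist (g t) x₀ ≤ (q + Q + dist (g 1) x₀) * t ∧
      (t : ℝ) ≤ q * (dist (g t) x₀ + dist (g 1) x₀ + Q) + 1 := by
    intro t ht
    have ht' : (1 : ℝ) ≤ t := by exact_mod_cast ht
    obtain ⟨h1, h2⟩ := hray t ht 1 (le_refl 1)
    rw [Nat.cast_one, abs_of_nonneg (by linarith)] at h1 h2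
    have h3 := dist_triangle (g t) (g 1) x₀
    have h4 := dist_triangle_right (g t) (g 1) x₀
    refine ⟨by nlinarith, ?_⟩
    have h5 : ((t : ℝ) - 1) / q ≤ dist (g t) x₀ + dist (g 1) x₀ + Q := by linarith
    rw [div_le_iff₀ hq0] at h5
    linarith
  constructor
  · rintro ⟨C, hC, T, hT⟩
    refine ⟨C * (q + Q + dist (g 1) x₀), by positivity, max T 1, fun t ht => ?_⟩
    have ht1 : T ≤ t := le_trans (le_max_left _ _) ht
    have ht2 : 1 ≤ t := le_trans (le_max_right _ _) ht
    have := kappa_scale κ hκ1 hκconc hκmono (q + Q + dist (g 1) x₀) t (dist (g t) x₀)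
      (by linarith) (by positivity) dist_nonneg (key t ht2).1
    calc _ ≤ _ := hT t ht1
      _ ≤ C * ((q + Q + dist (g 1) x₀) * κ t) := by gcongr
      _ = _ := by ring
  · rintro ⟨M, hM, T, hT⟩
    obtain ⟨N, hN⟩ := exists_nat_ge (2 * (q * (dist (g 1) x₀ + Q) + 1))
    refine ⟨M * (2 * q) + 1, by nlinarith [mul_pos hM hq0], max T (max 1 N), fun t ht => ?_⟩
    have ht1 : T ≤ t := le_trans (le_max_left _ _) ht
    have ht2 : 1 ≤ t := le_trans (le_trans (le_max_left _ _) (le_max_right _ _)) ht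
    have ht3 : N ≤ t := le_trans (le_trans (le_max_right _ _) (le_max_right _ _)) ht
    have ht3' : (N : ℝ) ≤ t := by exact_mod_cast ht3
    have := kappa_scale κ hκ1 hκconc hκmono (2 * q) (dist (g t) x₀) t
      (by linarith) dist_nonneg (by positivity) (by nlinarith [(key t ht2).2])
    have h1 := hκ1 (dist (g t) x₀) dist_nonneg
    calc _ ≤ _ := hT t ht1
      _ ≤ M * (2 * q * κ (dist (g t) x₀)) := by gcongr
      _ ≤ _ := by linarith
end

section
/- Let X be a proper geodesic δ-hyperbolic metric space, x₀ ∈ X, and κ a sublinear function. If g, h : [0,∞) → X are geodesic rays (isometric embeddings) with g(0) = h(0) = x₀ which κ-track each other, i.e., there is a constant C ≥ 1 such that d(g(t),h(t)) ≤ C·κ(C·d(x₀,g(t))) for all sufficiently large t, then g and h are within bounded distance of each other: sup_{t ≥ 0} d(g(t),h(t)) < ∞. -/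
open Filter Metric

/-- Proposition 6.8 (key step): in a proper geodesic δ-hyperbolic space, geodesic rays
that κ-track each other for a sublinear κ are within bounded distance. -/
theorem stmt_18 {X : Type*} [MetricSpace X] [ProperSpace X]
    (hgeo : IsGeodesicSpace X) (δ : ℝ)
    (hhyp : ∀ x y z a : X,
      gromovProd a x y ≥ min (gromovProd a x z) (gromovProd a z y) - δ / 4)
    (x₀ : X) (κ : ℝ → ℝ) (hκ1 : ∀ t, 0 ≤ t → 1 ≤ κ t)
    (hκsub : Tendsto (fun t => κ t / t) atTop (nhds 0))
    (g h : ℝ → X) (hg0 : g 0 = x₀) (hh0 : h 0 = x₀)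
    (hgiso : ∀ s t : ℝ, 0 ≤ s → 0 ≤ t → dist (g s) (g t) = |s - t|)
    (hhiso : ∀ s t : ℝ, 0 ≤ s → 0 ≤ t → dist (h s) (h t) = |s - t|)
    (htrack : ∃ C : ℝ, 1 ≤ C ∧ ∃ T : ℝ, ∀ t : ℝ, T ≤ t →
      dist (g t) (h t) ≤ C * κ (C * dist x₀ (g t))) :
    ∃ B : ℝ, ∀ t : ℝ, 0 ≤ t → dist (g t) (h t) ≤ B := by
  obtain ⟨C, hC, T, hT⟩ := htrack
  refine ⟨|δ|, fun t ht => ?_⟩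
  have hC0 : 0 < C := by linarith
  have hev : ∀ᶠ u in atTop, κ u / u < 1 / (C * C) :=
    hκsub.eventually (gt_mem_nhds (by positivity))
  obtain ⟨U, hU⟩ := eventually_atTop.1 hev
  obtain ⟨s, hsT, hsU, hst, hs1⟩ : ∃ s : ℝ, T ≤ s ∧ U ≤ s ∧ 2 * t ≤ s ∧ 1 ≤ s :=
    ⟨max (max T U) (max (2 * t) 1), by simp, by simp, by simp, by simp⟩
  have hs0 : 0 < s := by linarith
  have h0s : dist x₀ (g s) = s := by
    rw [← hg0, hgiso 0 s le_rfl hs0.le]; simp [abs_of_pos hs0]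
  have hd : dist (g s) (h s) ≤ s := by
    have h1 := hT s hsT
    rw [h0s] at h1
    have h2 := hU (C * s) (by nlinarith)
    rw [div_lt_iff₀ (by positivity)] at h2
    have h3 : C * κ (C * s) ≤ C * (1 / (C * C) * (C * s)) :=
      mul_le_mul_of_nonneg_left h2.le hC0.le
    have h4 : C * (1 / (C * C) * (C * s)) = s := by field_simp
    linarith
  have hg : ∀ r, 0 ≤ r → dist (g r) x₀ = r := fun r hr => by
    rw [← hg0, hgiso r 0 hr le_rfl]; simp [abs_of_nonneg hr]
  have hh : ∀ r, 0 ≤ r → dist (h r) x₀ = r := fun r hr => by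
    rw [← hh0, hhiso r 0 hr le_rfl]; simp [abs_of_nonneg hr]
  have e1 : dist (g t) (g s) = s - t := by
    rw [hgiso t s ht hs0.le, abs_of_nonpos (by linarith)]; ring
  have e2 : dist (h s) (h t) = s - t := by
    rw [hhiso s t hs0.le ht, abs_of_nonneg (by linarith)]
  have k1 := hhyp (g t) (h t) (g s) x₀
  have k2 := hhyp (g s) (h t) (h s) x₀
  simp only [gromovProd, hg t ht, hh t ht, hg s hs0.le, hh s hs0.le, e1, e2] at k1 k2
  have hδ := le_abs_self δ
  have hδ0 := abs_nonneg δ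
  have k3 : t ≤ min ((s + s - dist (g s) (h s)) / 2) ((s + t - (s - t)) / 2) :=
    le_min (by linarith) (by linarith)
  have k4 : t - |δ| / 4 ≤ min ((t + s - (s - t)) / 2) ((s + t - dist (g s) (h t)) / 2) :=
    le_min (by linarith) (by linarith)
  linarith
end
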